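/- arXiv:1810.03850 — 3 statements merged into one kernel-verified Lean document; each statement's English description precedes it below -/
import Mathlib

section
/- Let α ∈ (0,|s|), Λ > 1, K ≥ 1 and m, r ∈ ℕ. There exist constants C > 0 and L > 0, depending only on d, s, α, Λ, K, m and r, such that the following holds: for every ε ∈ (0,1), every centered jointly Gaussian random field (Φ_ε(x))_{x∈ℝ^d} whose covariance (x,y) ↦ E(Φ_ε(x)Φ_ε(y)) satisfies the standing covariance bound with parameters (α, Λ, ε), every θ ∈ ℝ and all points x₁, …, x_K ∈ ℝ^d, |E ∏_{j=1}^{K} ∂_θ^r 𝓗_m(e^{iθΦ_ε(x_j)})| ≤ C · max_{Γ ∈ Ω*} |Γ|, where Ω* is defined with respect to the clusters of x₁, …, x_K at scale Lε (for any fixed choice of representatives) and graph values are taken with R(i,j) := E(Φ_ε(x_i)Φ_ε(x_j)). -/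
open MeasureTheory ProbabilityTheory Filter

noncomputable section

def anorm {d : ℕ} (s : Fin d → ℝ) (x : Fin d → ℝ) : ℝ :=
  ∑ j, |x j| ^ (1 / s j)

def CovBound {d : ℕ} (s : Fin d → ℝ) (α Λ ε : ℝ)
    (R : (Fin d → ℝ) → (Fin d → ℝ) → ℝ) : Prop :=
  ∀ x y, ε ^ α / (Λ * (anorm s (x - y) + ε) ^ α) ≤ R x y ∧
    R x y ≤ Λ * ε ^ α / (anorm s (x - y) + ε) ^ α

def IsCenteredGaussianFamily {Ω ι : Type*} [MeasurableSpace Ω] (P : Measure Ω)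
    (X : ι → Ω → ℝ) : Prop :=
  ∀ (A : Finset ι) (c : ι → ℝ), ∃ v : NNReal,
    Measure.map (fun ω => ∑ i ∈ A, c i * X i ω) P = gaussianReal 0 v

def wick (v : ℝ) (n : ℕ) (x : ℝ) : ℝ :=
  Real.sqrt v ^ n * Polynomial.aeval (x / Real.sqrt v) (Polynomial.hermite n)

def hFun (m : ℕ) (θ x a : ℝ) : ℂ :=
  Complex.exp (Complex.I * θ * x) -
    ∑ n ∈ Finset.range m, (Complex.I ^ n / (n.factorial : ℂ)) * (θ : ℂ) ^ n *
      Complex.exp (((-(a * θ ^ 2) / 2 : ℝ) : ℂ)) * ((wick a n x : ℝ) : ℂ)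

def SameCluster {d K : ℕ} (s : Fin d → ℝ) (δ : ℝ) (x : Fin K → Fin d → ℝ) :
    Fin K → Fin K → Prop :=
  Relation.ReflTransGen fun i j => anorm s (x i - x j) ≤ δ

def IsSingletonIdx {d K : ℕ} (s : Fin d → ℝ) (δ : ℝ) (x : Fin K → Fin d → ℝ)
    (i : Fin K) : Prop :=
  ∀ j, SameCluster s δ x i j → j = i

def gdeg {K : ℕ} (G : Fin K → Fin K → ℕ) (i : Fin K) : ℕ := ∑ j, G i j

def pairs (K : ℕ) : Finset (Fin K × Fin K) :=
  Finset.univ.filter fun p => p.1 < p.2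

def gval {K : ℕ} (R : Fin K → Fin K → ℝ) (G : Fin K → Fin K → ℕ) : ℝ :=
  ∏ p ∈ pairs K, R p.1 p.2 ^ G p.1 p.2

def InOmegaStar {K : ℕ} (Sing : Fin K → Prop) (u : Fin K → Fin K) (m : ℕ)
    (G : Fin K → Fin K → ℕ) : Prop :=
  (∀ i, Sing i → gdeg G i = m ∨ gdeg G i = m + 1) ∧
  (∀ i, ¬ Sing i → u i = i →
    gdeg G i ≤ m + 1 ∧ (1 ≤ gdeg G i → ∃ s', Sing s' ∧ G s' i = gdeg G i)) ∧
  (∀ i, ¬ Sing i → u i ≠ i → gdeg G i = 0)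

/-!
A Taylor expansion in `θ` with integral remainder, one point at a time, reduces the expectation to
`E ∏ⱼ :Φ(xⱼ)^{nⱼ} e^{i tⱼ Φ(xⱼ)}:` with `m ≤ nⱼ ≤ m + r` and all `tⱼ` between `0` and `θ`; the
factor `e^{-θ²σ²/2}` produced at every point beats every power of `θ`. For a Gaussian family this
expectation is a derivative of `exp (-∑_{i < j} R(i, j) tᵢ tⱼ)`, so it is this exponential, which is
at most `1` because the `tⱼ` have the same sign, times a polynomial in `t` whose coefficients are
values of graphs with degrees at least `m`. Up to a constant, a graph value increases when an edge
is deleted, when two edges `ij` and `ik` are replaced by `jk`, and when an endpoint of an edge is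
moved to the representative of its cluster. As long as a graph of degree at least `m` at the
singletons is not in `Ω*`, one of these moves preserves that lower bound and makes the graph
smaller, so that its value is controlled by the value of a graph in `Ω*`.
-/

section DerivativeChain

variable {𝕜 E : Type*} [NontriviallyNormedField 𝕜] [NormedAddCommGroup E] [NormedSpace 𝕜 E]

lemma iteratedDeriv_of_hasDerivAt {f : ℕ → 𝕜 → E} (hf : ∀ n t, HasDerivAt (f n) (f (n + 1) t) t)
    (k n : ℕ) : iteratedDeriv k (f n) = f (n + k) := by
  induction k generalizing n with
  | zero => simp
  | succ k ih =>
    rw [iteratedDeriv_succ', show deriv (f n) = f (n + 1) from funext fun t => (hf n t).deriv, ih,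
      Nat.add_right_comm, Nat.add_assoc]

lemma contDiff_of_hasDerivAt {f : ℕ → 𝕜 → E} (hf : ∀ n t, HasDerivAt (f n) (f (n + 1) t) t)
    (k n : ℕ) : ContDiff 𝕜 k (f n) := by
  refine contDiff_of_differentiable_iteratedDeriv (n := k) fun j _ => ?_
  rw [iteratedDeriv_of_hasDerivAt hf]
  exact fun t => (hf _ t).differentiableAt

end DerivativeChain

section TaylorRemainder

variable {E : Type*} [NormedAddCommGroup E] [NormedSpace ℝ E]

/-- The remainder of order `q` of the Taylor expansion at `0` of the `k`-th term of a chain `f` of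
functions each of which is the derivative of the previous one. -/
def taylorRem (f : ℕ → ℝ → E) (q k : ℕ) (t : ℝ) : E :=
  f k t - ∑ n ∈ Finset.range q, (t ^ n / n.factorial) • f (k + n) 0

lemma hasDerivAt_taylorPolynomial (c : ℕ → E) (q : ℕ) (t : ℝ) :
    HasDerivAt (fun t : ℝ => ∑ n ∈ Finset.range (q + 1), (t ^ n / n.factorial) • c n)
      (∑ n ∈ Finset.range q, (t ^ n / n.factorial) • c (n + 1)) t := by
  refine (HasDerivAt.fun_sum fun n _ =>
    ((hasDerivAt_pow n t).div_const (n.factorial : ℝ)).smul_const (c n)).congr_deriv ?_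
  rw [Finset.sum_range_succ']
  simp only [Nat.cast_zero, zero_mul, zero_div, zero_smul, add_zero]
  refine Finset.sum_congr rfl fun n _ => ?_
  congr 1
  rw [Nat.factorial_succ, Nat.add_sub_cancel]
  push_cast
  exact mul_div_mul_left _ _ (Nat.cast_add_one_ne_zero n)

lemma hasDerivAt_taylorRem {f : ℕ → ℝ → E} (hf : ∀ n t, HasDerivAt (f n) (f (n + 1) t) t)
    (q k : ℕ) (t : ℝ) : HasDerivAt (taylorRem f q k) (taylorRem f (q - 1) (k + 1) t) t := by
  cases q with
  | zero =>
    refine ((hf k t).sub_const 0).congr_deriv ?_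
    simp only [taylorRem, Nat.zero_sub, Finset.sum_range_zero, sub_zero]
  | succ q =>
    have deriv_poly := hasDerivAt_taylorPolynomial (fun n => f (k + n) 0) q t
    refine ((hf k t).fun_sub deriv_poly).congr_deriv ?_
    simp only [taylorRem, Nat.add_sub_cancel, Nat.add_assoc, Nat.add_comm 1]

lemma hasDerivAt_taylorRem_chain {f : ℕ → ℝ → E} (hf : ∀ n t, HasDerivAt (f n) (f (n + 1) t) t)
    (m k : ℕ) (t : ℝ) :
    HasDerivAt (taylorRem f (m - k) k) (taylorRem f (m - (k + 1)) (k + 1) t) t :=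
  hasDerivAt_taylorRem hf (m - k) k t

lemma iteratedDeriv_taylorRem {f : ℕ → ℝ → E} (hf : ∀ n t, HasDerivAt (f n) (f (n + 1) t) t)
    (m k : ℕ) : iteratedDeriv k (taylorRem f m 0) = taylorRem f (m - k) k := by
  simpa using iteratedDeriv_of_hasDerivAt (f := fun k => taylorRem f (m - k) k)
    (hasDerivAt_taylorRem_chain hf m) k 0

lemma contDiff_taylorRem {f : ℕ → ℝ → E} (hf : ∀ n t, HasDerivAt (f n) (f (n + 1) t) t)
    (m k : ℕ) : ContDiff ℝ k (taylorRem f m 0) := by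
  simpa using contDiff_of_hasDerivAt (f := fun k => taylorRem f (m - k) k)
    (hasDerivAt_taylorRem_chain hf m) k 0

lemma abs_le_of_mem_uIcc_zero {t θ : ℝ} (ht : t ∈ Set.uIcc 0 θ) : |t| ≤ |θ| := by
  simpa using Set.abs_sub_left_of_mem_uIcc ht

lemma norm_taylorRem_le {f : ℕ → ℝ → E} (hf : ∀ n t, HasDerivAt (f n) (f (n + 1) t) t)
    {θ M : ℝ} (q k : ℕ) (hM : ∀ t ∈ Set.uIcc 0 θ, ‖f (k + q) t‖ ≤ M) {t : ℝ}
    (ht : t ∈ Set.uIcc 0 θ) : ‖taylorRem f q k t‖ ≤ |θ| ^ q * M := by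
  induction q generalizing k t with
  | zero => simpa [taylorRem] using hM t ht
  | succ q ih =>
    have zero_mem : (0 : ℝ) ∈ Set.uIcc 0 θ := Set.left_mem_uIcc
    have zero_at : taylorRem f (q + 1) k 0 = 0 := by simp [taylorRem, Finset.sum_range_succ']
    have mean_value := (convex_uIcc (0 : ℝ) θ).norm_image_sub_le_of_norm_hasDerivWithin_le
      (fun s _ => (hasDerivAt_taylorRem hf (q + 1) k s).hasDerivWithinAt)
      (fun s hs => ih (k + 1) (by simpa only [Nat.add_assoc, Nat.add_comm 1] using hM) hs)
      zero_mem ht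
    rw [zero_at, sub_zero, sub_zero] at mean_value
    have hM₀ : 0 ≤ M := (norm_nonneg _).trans (hM 0 zero_mem)
    calc ‖taylorRem f (q + 1) k t‖ ≤ |θ| ^ q * M * |t| := mean_value
      _ ≤ |θ| ^ q * M * |θ| := by gcongr _ * ?_; exact abs_le_of_mem_uIcc_zero ht
      _ = |θ| ^ (q + 1) * M := by ring

end TaylorRemainder

section WickExponential

open Complex Polynomial

/-- The `n`-th derivative at `t` of the Wick exponential `t ↦ exp (i t x + v t² / 2)` of a value `x`
of a centered Gaussian variable of variance `v`, in Rodrigues form. -/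
def wickExp (v x : ℝ) (n : ℕ) (t : ℝ) : ℂ :=
  (I * √v) ^ n * aeval ((x - I * v * t) / √v : ℂ) (hermite n) * cexp (I * x * t + v * t ^ 2 / 2)

lemma wickExp_zero (v x t : ℝ) : wickExp v x 0 t = cexp (I * x * t + v * t ^ 2 / 2) := by
  simp [wickExp]

lemma wickExp_apply_zero (v x : ℝ) (n : ℕ) : wickExp v x n 0 = I ^ n * wick v n x := by
  have h := aeval_algebraMap_apply ℂ (x / √v) (hermite n)
  simp only [coe_algebraMap, ofReal_div] at h
  simp [wickExp, wick, mul_pow, h, mul_assoc]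

lemma hasDerivAt_wickExp {v : ℝ} (hv : 0 < v) (x : ℝ) (n : ℕ) (t : ℝ) :
    HasDerivAt (wickExp v x n) (wickExp v x (n + 1) t) t := by
  have sqrt_ne_zero : (√v : ℂ) ≠ 0 := by exact_mod_cast (Real.sqrt_pos.2 hv).ne'
  have sqrt_sq : (√v : ℂ) ^ 2 = v := by exact_mod_cast Real.sq_sqrt hv.le
  have deriv_argument : HasDerivAt (fun z : ℂ => (x - I * v * z) / √v) (-(I * √v)) t := by
    refine ((((hasDerivAt_id (t : ℂ)).const_mul (I * v)).const_sub (x : ℂ)).div_const _).congr_deriv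
      ?_
    rw [← sqrt_sq]
    field_simp
  have deriv_exponent : HasDerivAt (fun z : ℂ => I * x * z + v * z ^ 2 / 2) (I * x + v * t) t := by
    refine (((hasDerivAt_id (t : ℂ)).const_mul (I * x)).add
      (((hasDerivAt_pow 2 (t : ℂ)).const_mul (v : ℂ)).div_const 2)).congr_deriv ?_
    norm_num
    ring
  refine (((((hermite n).hasDerivAt_aeval _).comp (t : ℂ) deriv_argument).const_mul
    ((I * √v) ^ n)).mul deriv_exponent.cexp).comp_ofReal.congr_deriv ?_
  have argument_mul : I * x + v * t = I * √v * ((x - I * v * t) / √v) := by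
    field_simp
    linear_combination (v * t : ℂ) * I_sq
  simp only [wickExp, Function.comp_apply, hermite_succ, map_sub, map_mul, aeval_X, argument_mul]
  ring

/-- The factor `exp (-v t² / 2)` relating `exp (i t X)` to its Wick exponential, where `v` is the
variance of `X`. -/
def wickPrefactor (v t : ℝ) : ℝ := Real.exp (-(v * t ^ 2) / 2)

lemma contDiff_wickPrefactor (v : ℝ) (n : ℕ) : ContDiff ℝ n (wickPrefactor v) := by
  unfold wickPrefactor
  fun_prop

lemma hFun_eq_smul_taylorRem (m : ℕ) (t x v : ℝ) :
    hFun m t x v = wickPrefactor v t • taylorRem (wickExp v x) m 0 t := by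
  rw [taylorRem, smul_sub, wickExp_zero, hFun, wickPrefactor]
  congr 1
  · rw [real_smul, ofReal_exp, ← Complex.exp_add]
    congr 1
    push_cast
    ring
  · rw [Finset.smul_sum]
    refine Finset.sum_congr rfl fun n _ => ?_
    rw [zero_add, wickExp_apply_zero, real_smul, real_smul, ofReal_exp]
    push_cast
    ring

lemma iteratedDeriv_hFun {v : ℝ} (hv : 0 < v) (m r : ℕ) (x θ : ℝ) :
    iteratedDeriv r (fun t => hFun m t x v) θ = ∑ k ∈ Finset.range (r + 1),
      (r.choose k * iteratedDeriv k (wickPrefactor v) θ) •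
        taylorRem (wickExp v x) (m - (r - k)) (r - k) θ := by
  have leibniz := iteratedDerivWithin_smul (Set.mem_univ θ) uniqueDiffOn_univ
    (contDiff_wickPrefactor v r).contDiffAt.contDiffWithinAt
    (contDiff_taylorRem (hasDerivAt_wickExp hv x) m r).contDiffAt.contDiffWithinAt
  simp only [iteratedDerivWithin_univ, iteratedDeriv_taylorRem (hasDerivAt_wickExp hv x)]
    at leibniz
  simp only [hFun_eq_smul_taylorRem, mul_smul, Nat.cast_smul_eq_nsmul]
  exact leibniz

end WickExponential

section PrefactorDecay

open Polynomial

lemma exists_norm_aeval_le {R A : Type*} [CommSemiring R] [SeminormedRing A] [NormOneClass A]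
    [Algebra R A] (p : R[X]) : ∃ B, 0 ≤ B ∧ ∀ z : A, ‖aeval z p‖ ≤ B * (1 + ‖z‖) ^ p.natDegree := by
  refine ⟨∑ i ∈ Finset.range (p.natDegree + 1), ‖algebraMap R A (p.coeff i)‖, by positivity,
    fun z => ?_⟩
  rw [aeval_eq_sum_range, Finset.sum_mul]
  refine norm_sum_le_of_le _ fun i hi => ?_
  have hi : i ≤ p.natDegree := Finset.mem_range_succ_iff.1 hi
  calc ‖p.coeff i • z ^ i‖ ≤ ‖algebraMap R A (p.coeff i)‖ * ‖z‖ ^ i := by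
        rw [Algebra.smul_def]
        exact (norm_mul_le _ _).trans (by gcongr; exact norm_pow_le z i)
    _ ≤ ‖algebraMap R A (p.coeff i)‖ * (1 + ‖z‖) ^ i := by gcongr; simp
    _ ≤ ‖algebraMap R A (p.coeff i)‖ * (1 + ‖z‖) ^ p.natDegree := by
        gcongr
        simp

lemma pow_one_add_abs_mul_exp_neg_sq_le (N : ℕ) (y : ℝ) :
    (1 + |y|) ^ N * Real.exp (-(y ^ 2 / 2)) ≤ N.factorial * Real.exp (3 / 2) := by
  have pow_le := Real.pow_div_factorial_le_exp (1 + |y|) (by positivity) N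
  rw [div_le_iff₀' (by positivity)] at pow_le
  calc (1 + |y|) ^ N * Real.exp (-(y ^ 2 / 2))
      ≤ N.factorial * Real.exp (1 + |y|) * Real.exp (-(y ^ 2 / 2)) := by gcongr
    _ = N.factorial * Real.exp (1 + |y| - y ^ 2 / 2) := by
        rw [mul_assoc, ← Real.exp_add, sub_eq_add_neg]
    _ ≤ N.factorial * Real.exp (3 / 2) := by
        gcongr
        rw [← sq_abs]
        nlinarith [sq_nonneg (|y| - 1)]

lemma exists_iteratedDeriv_gaussian_mul_le (q N : ℕ) :
    ∃ D, ∀ y, |iteratedDeriv q (fun y => Real.exp (-(y ^ 2 / 2))) y| * (1 + |y|) ^ N ≤ D := by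
  obtain ⟨B, hB, norm_hermite_le⟩ := exists_norm_aeval_le (A := ℝ) (hermite q)
  rw [natDegree_hermite] at norm_hermite_le
  refine ⟨B * ((q + N).factorial * Real.exp (3 / 2)), fun y => ?_⟩
  rw [iteratedDeriv_eq_iterate, deriv_gaussian_eq_hermite_mul_gaussian, abs_mul, abs_mul,
    abs_neg_one_pow, one_mul, Real.abs_exp]
  calc |aeval y (hermite q)| * Real.exp (-(y ^ 2 / 2)) * (1 + |y|) ^ N
      ≤ B * (1 + |y|) ^ q * Real.exp (-(y ^ 2 / 2)) * (1 + |y|) ^ N := by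
        gcongr
        exact norm_hermite_le y
    _ = B * ((1 + |y|) ^ (q + N) * Real.exp (-(y ^ 2 / 2))) := by ring
    _ ≤ B * ((q + N).factorial * Real.exp (3 / 2)) :=
        mul_le_mul_of_nonneg_left (pow_one_add_abs_mul_exp_neg_sq_le _ _) hB

lemma iteratedDeriv_wickPrefactor {v : ℝ} (hv : 0 ≤ v) (q : ℕ) (θ : ℝ) :
    iteratedDeriv q (wickPrefactor v) θ =
      √v ^ q * iteratedDeriv q (fun y => Real.exp (-(y ^ 2 / 2))) (√v * θ) := by
  have scaling : wickPrefactor v = fun t => Real.exp (-((√v * t) ^ 2 / 2)) := by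
    funext t
    rw [wickPrefactor, mul_pow, Real.sq_sqrt hv, neg_div]
  rw [scaling, iteratedDeriv_comp_const_mul (f := fun y => Real.exp (-(y ^ 2 / 2))) (by fun_prop)]

lemma exists_iteratedDeriv_wickPrefactor_mul_le (q N : ℕ) {Λ : ℝ} (hΛ : 1 ≤ Λ) :
    ∃ D, ∀ v ∈ Set.Icc Λ⁻¹ Λ, ∀ θ, |iteratedDeriv q (wickPrefactor v) θ| * (1 + |θ|) ^ N ≤ D := by
  obtain ⟨D, hD⟩ := exists_iteratedDeriv_gaussian_mul_le q N
  refine ⟨√Λ ^ q * √Λ ^ N * D, fun v ⟨hv, hv'⟩ θ => ?_⟩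
  have hΛ₀ : 0 < Λ := by linarith
  have one_le_sqrt : 1 ≤ √Λ := Real.one_le_sqrt.2 hΛ
  have one_le_mul_sqrt : 1 ≤ √Λ * √v := by
    rw [← Real.sqrt_mul hΛ₀.le, Real.one_le_sqrt]
    exact (inv_le_iff_one_le_mul₀' hΛ₀).1 hv
  have one_add_le : 1 + |θ| ≤ √Λ * (1 + |√v * θ|) := by
    rw [abs_mul, abs_of_nonneg (Real.sqrt_nonneg v), mul_add, mul_one, ← mul_assoc]
    gcongr
    exact le_mul_of_one_le_left (abs_nonneg θ) one_le_mul_sqrt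
  rw [iteratedDeriv_wickPrefactor ((inv_nonneg.2 hΛ₀.le).trans hv), abs_mul,
    abs_of_nonneg (by positivity)]
  calc √v ^ q * |iteratedDeriv q (fun y => Real.exp (-(y ^ 2 / 2))) (√v * θ)| * (1 + |θ|) ^ N
      ≤ √Λ ^ q * |iteratedDeriv q (fun y => Real.exp (-(y ^ 2 / 2))) (√v * θ)| *
        (√Λ * (1 + |√v * θ|)) ^ N := by gcongr
    _ = √Λ ^ q * √Λ ^ N * (|iteratedDeriv q (fun y => Real.exp (-(y ^ 2 / 2))) (√v * θ)| *
        (1 + |√v * θ|) ^ N) := by rw [mul_pow]; ring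
    _ ≤ √Λ ^ q * √Λ ^ N * D := by gcongr; exact hD _

/-- The constant by which `∂_θ^r 𝓗_m (e^{iθX})`, for `X` of variance `v`, is controlled in terms of
the derivatives of orders `m, …, m + r` of the Wick exponential of `X` between `0` and `θ`. -/
def hFunWeight (m r : ℕ) (v θ : ℝ) : ℝ :=
  ∑ k ∈ Finset.range (r + 1),
    r.choose k * |iteratedDeriv k (wickPrefactor v) θ| * |θ| ^ (m - (r - k))

lemma hFunWeight_nonneg (m r : ℕ) (v θ : ℝ) : 0 ≤ hFunWeight m r v θ := by
  unfold hFunWeight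
  positivity

lemma exists_hFunWeight_mul_le (m r N : ℕ) {Λ : ℝ} (hΛ : 1 ≤ Λ) :
    ∃ D, ∀ v ∈ Set.Icc Λ⁻¹ Λ, ∀ θ, hFunWeight m r v θ * (1 + |θ|) ^ N ≤ D := by
  choose D hD using fun k =>
    exists_iteratedDeriv_wickPrefactor_mul_le k ((m - (r - k)) + N) hΛ
  refine ⟨∑ k ∈ Finset.range (r + 1), r.choose k * D k, fun v hv θ => ?_⟩
  rw [hFunWeight, Finset.sum_mul]
  refine Finset.sum_le_sum fun k _ => ?_
  calc r.choose k * |iteratedDeriv k (wickPrefactor v) θ| * |θ| ^ (m - (r - k)) * (1 + |θ|) ^ N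
      ≤ r.choose k * |iteratedDeriv k (wickPrefactor v) θ| * (1 + |θ|) ^ (m - (r - k)) *
        (1 + |θ|) ^ N := by gcongr; simp
    _ = r.choose k * (|iteratedDeriv k (wickPrefactor v) θ| * (1 + |θ|) ^ (m - (r - k) + N)) := by
        ring
    _ ≤ r.choose k * D k := by gcongr; exact hD k v hv θ

end PrefactorDecay

section FiniteMoments

variable {Ω : Type*} [MeasurableSpace Ω]

/-- The algebra of complex random variables all of whose moments are finite. -/
def finiteMoments (P : Measure Ω) [IsFiniteMeasure P] : Subalgebra ℂ (Ω → ℂ) where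
  carrier := {Y | ∀ p : ℕ, MemLp Y p P}
  mul_mem' {Y Z} hY hZ p := by
    have : ENNReal.HolderTriple (2 * p : ℕ) (2 * p : ℕ) p := by
      constructor
      push_cast
      rw [ENNReal.mul_inv (by simp) (by simp), ← add_mul, ENNReal.inv_two_add_inv_two, one_mul]
    exact (hZ (2 * p)).mul (hY (2 * p))
  add_mem' hY hZ p := (hY p).add (hZ p)
  algebraMap_mem' c _ := memLp_const c

variable {P : Measure Ω} [IsFiniteMeasure P]

lemma integrable_of_mem_finiteMoments {Y : Ω → ℂ} (hY : Y ∈ finiteMoments P) : Integrable Y P :=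
  memLp_one_iff_integrable.1 (by exact_mod_cast hY 1)

lemma const_mem_finiteMoments (c : ℂ) : (fun _ => c) ∈ finiteMoments P :=
  (finiteMoments P).algebraMap_mem c

lemma mem_finiteMoments_of_norm_le {Y Z : Ω → ℂ} (hZ : Z ∈ finiteMoments P)
    (hY : AEStronglyMeasurable Y P) (h : ∀ ω, ‖Y ω‖ ≤ ‖Z ω‖) : Y ∈ finiteMoments P :=
  fun p => (hZ p).mono hY (ae_of_all _ h)

lemma norm_integral_mul_prod_le {ι κ : Type*} {A : ι → Ω → ℂ} {B : ι → κ → Ω → ℂ} {Q : Set κ}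
    {W : ι → ℝ} (hQ : Q.Nonempty) (hA : ∀ j, A j ∈ finiteMoments P)
    (hB : ∀ j, ∀ q ∈ Q, B j q ∈ finiteMoments P)
    (hAB : ∀ j, ∀ Y ∈ finiteMoments P, ∀ M : ℝ, (∀ q ∈ Q, ‖P[Y * B j q]‖ ≤ M) →
      ‖P[Y * A j]‖ ≤ W j * M)
    (S : Finset ι) {Y : Ω → ℂ} (hY : Y ∈ finiteMoments P) {M : ℝ}
    (hM : ∀ q : ι → κ, (∀ j, q j ∈ Q) → ‖P[Y * ∏ j ∈ S, B j (q j)]‖ ≤ M) :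
    ‖P[Y * ∏ j ∈ S, A j]‖ ≤ (∏ j ∈ S, W j) * M := by
  classical
  induction S using Finset.induction_on generalizing Y with
  | empty =>
    obtain ⟨q, hq⟩ := hQ
    simpa using hM (fun _ => q) fun _ => hq
  | insert j S hj ih =>
    rw [Finset.prod_insert hj, Finset.prod_insert hj, mul_assoc, mul_comm (A j), ← mul_assoc]
    refine hAB j _ (mul_mem hY (prod_mem fun i _ => hA i)) _ fun q hq => ?_
    rw [mul_right_comm]
    refine ih (mul_mem hY (hB j q hq)) fun q' hq' => ?_
    have update_mem : ∀ i, Function.update q' j q i ∈ Q := by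
      intro i
      rcases eq_or_ne i j with rfl | hij
      · simpa using hq
      · simpa [hij] using hq' i
    have bound := hM _ update_mem
    have prod_eq : ∏ i ∈ S, B i (Function.update q' j q i) = ∏ i ∈ S, B i (q' i) :=
      Finset.prod_congr rfl fun i hi => by
        rw [Function.update_of_ne (ne_of_mem_of_not_mem hi hj)]
    rwa [Finset.prod_insert hj, prod_eq, Function.update_self, ← mul_assoc] at bound

end FiniteMoments

section WickMoments

open Polynomial

lemma continuous_wickExp (v : ℝ) (n : ℕ) (t : ℝ) : Continuous fun x => wickExp v x n t := by
  unfold wickExp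
  fun_prop

lemma norm_cexp_wickExponent (v x t : ℝ) :
    ‖Complex.exp (Complex.I * x * t + v * t ^ 2 / 2)‖ = Real.exp (v * t ^ 2 / 2) := by
  have re_im : Complex.I * x * t + v * t ^ 2 / 2 =
      ((v * t ^ 2 / 2 : ℝ) : ℂ) + ((x * t : ℝ) : ℂ) * Complex.I := by
    push_cast
    ring
  rw [re_im, Complex.norm_exp, Complex.add_re, Complex.ofReal_re, Complex.re_ofReal_mul,
    Complex.I_re, mul_zero, add_zero]

lemma exists_norm_wickExp_le {v : ℝ} (hv : 0 ≤ v) (n : ℕ) (T : ℝ) :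
    ∃ B, 0 ≤ B ∧ ∀ x t, |t| ≤ T → ‖wickExp v x n t‖ ≤ B * (1 + |x|) ^ n := by
  obtain ⟨B, hB, norm_hermite_le⟩ := exists_norm_aeval_le (A := ℂ) (hermite n)
  rw [natDegree_hermite] at norm_hermite_le
  refine ⟨√v ^ n * (B * (1 + (1 + v * |T|) / √v) ^ n) * Real.exp (v * T ^ 2 / 2), by positivity,
    fun x t ht => ?_⟩
  have hT : |t| ≤ |T| := ht.trans (le_abs_self T)
  have argument_le : ‖(x - Complex.I * v * t) / √v‖ ≤ (|x| + v * |T|) / √v := by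
    rw [norm_div, Complex.norm_real, Real.norm_of_nonneg (Real.sqrt_nonneg v)]
    gcongr
    refine (norm_sub_le _ _).trans ?_
    simp only [norm_mul, Complex.norm_I, one_mul, Complex.norm_real, Real.norm_eq_abs,
      abs_of_nonneg hv]
    gcongr
  have one_add_argument_le :
      1 + (|x| + v * |T|) / √v ≤ (1 + (1 + v * |T|) / √v) * (1 + |x|) := by
    have hx : 0 ≤ |x| + |x| * (v * |T|) / √v + 1 / √v := by positivity
    linear_combination hx
  have norm_prefactor : ‖(Complex.I * √v) ^ n‖ = √v ^ n := by
    simp [abs_of_nonneg]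
  rw [wickExp, norm_mul, norm_mul, norm_prefactor, norm_cexp_wickExponent]
  calc √v ^ n * ‖aeval ((x - Complex.I * v * t) / √v : ℂ) (hermite n)‖ * Real.exp (v * t ^ 2 / 2)
      ≤ √v ^ n * (B * ((1 + (1 + v * |T|) / √v) * (1 + |x|)) ^ n) *
        Real.exp (v * T ^ 2 / 2) := by
        gcongr √v ^ n * ?_ * Real.exp (v * ?_ / 2)
        · exact (norm_hermite_le _).trans (by gcongr; linarith)
        · exact sq_le_sq.2 hT
    _ = √v ^ n * (B * (1 + (1 + v * |T|) / √v) ^ n) * Real.exp (v * T ^ 2 / 2) *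
        (1 + |x|) ^ n := by
        rw [mul_pow]
        ring

variable {Ω : Type*} [MeasurableSpace Ω] {P : Measure Ω} [IsFiniteMeasure P] {X : Ω → ℝ}

lemma mul_one_add_abs_pow_mem_finiteMoments (hX : (fun ω => (X ω : ℂ)) ∈ finiteMoments P) (B : ℝ)
    (n : ℕ) : (fun ω => ((B * (1 + |X ω|) ^ n : ℝ) : ℂ)) ∈ finiteMoments P := by
  have abs_mem : (fun ω => ((|X ω| : ℝ) : ℂ)) ∈ finiteMoments P :=
    mem_finiteMoments_of_norm_le hX
      (Complex.continuous_ofReal.comp_aestronglyMeasurable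
        (Complex.continuous_re.comp_aestronglyMeasurable (hX 1).1).norm) fun ω => by simp
  have mem := mul_mem (const_mem_finiteMoments (P := P) (B : ℂ))
    (pow_mem (add_mem (one_mem (finiteMoments P)) abs_mem) n)
  convert mem using 2
  push_cast
  rfl

lemma norm_ofReal_mul_one_add_abs_pow {B : ℝ} (hB : 0 ≤ B) (x : ℝ) (n : ℕ) :
    ‖((B * (1 + |x|) ^ n : ℝ) : ℂ)‖ = B * (1 + |x|) ^ n := by
  rw [Complex.norm_real, Real.norm_of_nonneg (by positivity)]

lemma wickExp_mem_finiteMoments (hX : (fun ω => (X ω : ℂ)) ∈ finiteMoments P) {v : ℝ}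
    (hv : 0 ≤ v) (n : ℕ) (t : ℝ) : (fun ω => wickExp v (X ω) n t) ∈ finiteMoments P := by
  obtain ⟨B, hB, norm_le⟩ := exists_norm_wickExp_le hv n |t|
  refine mem_finiteMoments_of_norm_le (mul_one_add_abs_pow_mem_finiteMoments hX B n)
    ((continuous_wickExp v n t).comp_aestronglyMeasurable
      (Complex.continuous_re.comp_aestronglyMeasurable (hX 1).1)) fun ω => ?_
  rw [norm_ofReal_mul_one_add_abs_pow hB]
  exact norm_le _ _ le_rfl

lemma hasDerivAt_integral_mul_wickExp (hX : (fun ω => (X ω : ℂ)) ∈ finiteMoments P) {v : ℝ}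
    (hv : 0 < v) {Y : Ω → ℂ} (hY : Y ∈ finiteMoments P) (n : ℕ) (t : ℝ) :
    HasDerivAt (fun t => ∫ ω, Y ω * wickExp v (X ω) n t ∂P)
      (∫ ω, Y ω * wickExp v (X ω) (n + 1) t ∂P) t := by
  obtain ⟨B, hB, norm_le⟩ := exists_norm_wickExp_le hv.le (n + 1) (|t| + 1)
  have mul_mem_finiteMoments := fun n t => mul_mem hY (wickExp_mem_finiteMoments hX hv.le n t)
  refine (hasDerivAt_integral_of_dominated_loc_of_deriv_le (Metric.ball_mem_nhds t one_pos)
    (.of_forall fun s => (mul_mem_finiteMoments n s 1).1)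
    (integrable_of_mem_finiteMoments (mul_mem_finiteMoments n t))
    (mul_mem_finiteMoments (n + 1) t 1).1 (ae_of_all _ fun ω s hs => ?_)
    (integrable_of_mem_finiteMoments
      (mul_mem hY (mul_one_add_abs_pow_mem_finiteMoments hX B (n + 1)))).norm
    (ae_of_all _ fun ω s _ => (hasDerivAt_wickExp hv _ n s).const_mul (Y ω))).2
  have abs_le : |s| ≤ |t| + 1 := by
    have dist_lt : |s - t| < 1 := by simpa [Real.dist_eq] using hs
    linarith [abs_sub_abs_le_abs_sub s t]
  rw [norm_mul, Pi.mul_apply, norm_mul, norm_ofReal_mul_one_add_abs_pow hB]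
  exact mul_le_mul_of_nonneg_left (norm_le _ _ abs_le) (norm_nonneg _)

lemma taylorRem_wickExp_mem_finiteMoments (hX : (fun ω => (X ω : ℂ)) ∈ finiteMoments P) {v : ℝ}
    (hv : 0 ≤ v) (q k : ℕ) (t : ℝ) :
    (fun ω => taylorRem (wickExp v (X ω)) q k t) ∈ finiteMoments P := by
  have mem := sub_mem (wickExp_mem_finiteMoments hX hv k t)
    (sum_mem fun n (_ : n ∈ Finset.range q) => (finiteMoments P).smul_mem
      (wickExp_mem_finiteMoments hX hv (k + n) 0) ((t ^ n / n.factorial : ℝ) : ℂ))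
  convert mem using 2
  simp [taylorRem]

lemma integral_mul_taylorRem_wickExp (hX : (fun ω => (X ω : ℂ)) ∈ finiteMoments P) {v : ℝ}
    (hv : 0 ≤ v) {Y : Ω → ℂ} (hY : Y ∈ finiteMoments P) (q k : ℕ) (t : ℝ) :
    ∫ ω, Y ω * taylorRem (wickExp v (X ω)) q k t ∂P =
      taylorRem (fun n t => ∫ ω, Y ω * wickExp v (X ω) n t ∂P) q k t := by
  have integrable : ∀ n t, Integrable (fun ω => Y ω * wickExp v (X ω) n t) P := fun n t =>
    integrable_of_mem_finiteMoments (mul_mem hY (wickExp_mem_finiteMoments hX hv n t))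
  simp only [taylorRem, mul_sub, Finset.mul_sum, mul_smul_comm]
  rw [integral_sub (integrable k t) (integrable_finsetSum _ fun n _ => (integrable _ _).fun_smul _),
    integral_finsetSum _ fun n _ => (integrable _ _).fun_smul _]
  simp only [integral_smul]

lemma iteratedDeriv_hFun_mem_finiteMoments (hX : (fun ω => (X ω : ℂ)) ∈ finiteMoments P) {v : ℝ}
    (hv : 0 < v) (m r : ℕ) (θ : ℝ) :
    (fun ω => iteratedDeriv r (fun t => hFun m t (X ω) v) θ) ∈ finiteMoments P := by
  have mem := sum_mem fun k (_ : k ∈ Finset.range (r + 1)) => (finiteMoments P).smul_mem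
    (taylorRem_wickExp_mem_finiteMoments hX hv.le (m - (r - k)) (r - k) θ)
    ((r.choose k * iteratedDeriv k (wickPrefactor v) θ : ℝ) : ℂ)
  convert mem using 2
  simp [iteratedDeriv_hFun hv]

lemma norm_integral_mul_iteratedDeriv_hFun_le (hX : (fun ω => (X ω : ℂ)) ∈ finiteMoments P)
    {v : ℝ} (hv : 0 < v) {Y : Ω → ℂ} (hY : Y ∈ finiteMoments P) {m r : ℕ} {θ M : ℝ}
    (hM : ∀ n ∈ Set.Icc m (m + r), ∀ t ∈ Set.uIcc 0 θ,
      ‖∫ ω, Y ω * wickExp v (X ω) n t ∂P‖ ≤ M) :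
    ‖∫ ω, Y ω * iteratedDeriv r (fun t => hFun m t (X ω) v) θ ∂P‖ ≤
      hFunWeight m r v θ * M := by
  have integrable : ∀ q k, Integrable (fun ω => Y ω * taylorRem (wickExp v (X ω)) q k θ) P :=
    fun q k => integrable_of_mem_finiteMoments
      (mul_mem hY (taylorRem_wickExp_mem_finiteMoments hX hv.le q k θ))
  simp only [iteratedDeriv_hFun hv, Finset.mul_sum, mul_smul_comm]
  rw [integral_finsetSum _ fun k _ => (integrable _ _).fun_smul _, hFunWeight, Finset.sum_mul]
  refine norm_sum_le_of_le _ fun k _ => ?_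
  rw [integral_smul, integral_mul_taylorRem_wickExp hX hv.le hY, norm_smul, Real.norm_eq_abs,
    abs_mul, Nat.abs_cast, mul_assoc _ (_ ^ _)]
  gcongr
  exact norm_taylorRem_le (hasDerivAt_integral_mul_wickExp hX hv hY) _ _
    (hM _ ⟨by lia, by lia⟩) Set.right_mem_uIcc

lemma norm_integral_prod_iteratedDeriv_hFun_le {ι : Type*} [Fintype ι] {X : ι → Ω → ℝ} {v : ι → ℝ}
    (hX : ∀ j, (fun ω => (X j ω : ℂ)) ∈ finiteMoments P) (hv : ∀ j, 0 < v j) {m r : ℕ} {θ M : ℝ}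
    (hM : ∀ n : ι → ℕ, (∀ j, n j ∈ Set.Icc m (m + r)) → ∀ t : ι → ℝ, (∀ j, t j ∈ Set.uIcc 0 θ) →
      ‖∫ ω, ∏ j, wickExp (v j) (X j ω) (n j) (t j) ∂P‖ ≤ M) :
    ‖∫ ω, ∏ j, iteratedDeriv r (fun t => hFun m t (X j ω) (v j)) θ ∂P‖ ≤
      (∏ j, hFunWeight m r (v j) θ) * M := by
  have bound := norm_integral_mul_prod_le (P := P) (Y := 1) (M := M)
    (A := fun j ω => iteratedDeriv r (fun t => hFun m t (X j ω) (v j)) θ)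
    (B := fun j (q : ℕ × ℝ) ω => wickExp (v j) (X j ω) q.1 q.2)
    (Q := Set.Icc m (m + r) ×ˢ Set.uIcc 0 θ) (W := fun j => hFunWeight m r (v j) θ)
    ⟨(m, 0), by simp⟩ (fun j => iteratedDeriv_hFun_mem_finiteMoments (hX j) (hv j) m r θ)
    (fun j q _ => wickExp_mem_finiteMoments (hX j) (hv j).le q.1 q.2)
    (fun j Y hY M hM => norm_integral_mul_iteratedDeriv_hFun_le (hX j) (hv j) hY
      fun n hn t ht => hM (n, t) ⟨hn, ht⟩)
    Finset.univ (one_mem _)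
  simp only [one_mul, Finset.prod_fn] at bound
  exact bound fun q hq => hM (fun j => (q j).1) (fun j => (hq j).1) (fun j => (q j).2)
    fun j => (hq j).2

end WickMoments

section Multigraphs

variable {K : ℕ} {G : Fin K → Fin K → ℕ} {R : Fin K → Fin K → ℝ}

/-- Edge multiplicities of a graph: they are symmetric and there are no self-loops. -/
structure IsMultigraph (G : Fin K → Fin K → ℕ) : Prop where
  symm : ∀ i j, G i j = G j i
  loopless : ∀ i, G i i = 0

/-- The graph whose only edge is a simple edge between `i` and `j`. -/
def singleEdge (i j : Fin K) : Fin K → Fin K → ℕ :=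
  fun a b => if s(a, b) = s(i, j) then 1 else 0

lemma singleEdge_comm (i j : Fin K) : singleEdge i j = singleEdge j i := by
  funext a b
  rw [singleEdge, singleEdge, Sym2.eq_swap (a := i)]

lemma isMultigraph_zero : IsMultigraph (0 : Fin K → Fin K → ℕ) where
  symm _ _ := rfl
  loopless _ := rfl

lemma IsMultigraph.add_singleEdge (hG : IsMultigraph G) {i j : Fin K} (hij : i ≠ j) :
    IsMultigraph (G + singleEdge i j) where
  symm a b := by simp only [Pi.add_apply, singleEdge, hG.symm a b, Sym2.eq_swap (a := a)]
  loopless a := by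
    simp only [Pi.add_apply, singleEdge, hG.loopless a, Sym2.eq_iff]
    grind

lemma IsMultigraph.ne_of_pos (hG : IsMultigraph G) {i j : Fin K} (hij : 1 ≤ G i j) : i ≠ j := by
  rintro rfl
  simp [hG.loopless] at hij

lemma IsMultigraph.exists_eq_add_singleEdge (hG : IsMultigraph G) {i j : Fin K}
    (hij : 1 ≤ G i j) : ∃ G', IsMultigraph G' ∧ G = G' + singleEdge i j := by
  refine ⟨fun a b => G a b - singleEdge i j a b, ⟨fun a b => ?_, fun a => ?_⟩, ?_⟩
  · simp only [singleEdge, hG.symm a b, Sym2.eq_swap (a := a)]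
  · simp [hG.loopless a]
  · have hji := hG.symm i j
    funext a b
    simp only [Pi.add_apply, singleEdge, Sym2.eq_iff]
    grind

lemma le_gdeg (G : Fin K → Fin K → ℕ) (i j : Fin K) : G i j ≤ gdeg G i :=
  Finset.single_le_sum_of_canonicallyOrdered (Finset.mem_univ j)

lemma exists_pos_of_gdeg_pos {i : Fin K} (hi : 1 ≤ gdeg G i) : ∃ j, 1 ≤ G i j := by
  by_contra! h
  have : gdeg G i = 0 := Finset.sum_eq_zero fun j _ => Nat.lt_one_iff.1 (h j)
  omega

lemma eq_gdeg_of_forall_eq {i j : Fin K} (h : ∀ k, 1 ≤ G i k → k = j) : G i j = gdeg G i := by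
  refine (Finset.sum_eq_single j (fun k _ hk => ?_) (by simp)).symm
  by_contra hne
  exact hk (h k (Nat.one_le_iff_ne_zero.2 hne))

lemma gdeg_zero : gdeg (0 : Fin K → Fin K → ℕ) = 0 := by
  funext i
  simp [gdeg]

lemma gdeg_add (G G' : Fin K → Fin K → ℕ) : gdeg (G + G') = gdeg G + gdeg G' := by
  funext i
  simp [gdeg, Finset.sum_add_distrib]

lemma gdeg_singleEdge {i j : Fin K} (hij : i ≠ j) :
    gdeg (singleEdge i j) = Pi.single i 1 + Pi.single j 1 := by
  funext a
  have split_edge : ∀ b, singleEdge i j a b =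
      (if b = j then (Pi.single i 1 : Fin K → ℕ) a else 0) +
        (if b = i then (Pi.single j 1 : Fin K → ℕ) a else 0) := by
    intro b
    simp only [singleEdge, Pi.single_apply, Sym2.eq_iff]
    grind
  simp [gdeg, split_edge, Finset.sum_add_distrib]

lemma gval_zero : gval R 0 = 1 := by
  simp [gval]

lemma gval_add (R : Fin K → Fin K → ℝ) (G G' : Fin K → Fin K → ℕ) :
    gval R (G + G') = gval R G * gval R G' := by
  simp [gval, pow_add, Finset.prod_mul_distrib]

lemma gval_singleEdge (hR : ∀ i j, R i j = R j i) {i j : Fin K} (hij : i ≠ j) :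
    gval R (singleEdge i j) = R i j := by
  wlog h : i < j generalizing i j
  · rw [singleEdge_comm, hR i j]
    exact this hij.symm (lt_of_le_of_ne (not_lt.1 h) hij.symm)
  · rw [gval, Finset.prod_eq_single_of_mem (i, j) (by simpa [pairs] using h)]
    · simp [singleEdge]
    · rintro ⟨a, b⟩ hab hne
      have hlt : a < b := by simpa [pairs] using hab
      have no_edge : singleEdge i j a b = 0 := by
        simp only [singleEdge, Sym2.eq_iff]
        grind
      simp [no_edge]

lemma gval_add_singleEdge (hR : ∀ i j, R i j = R j i) (G : Fin K → Fin K → ℕ) {i j : Fin K}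
    (hij : i ≠ j) : gval R (G + singleEdge i j) = gval R G * R i j := by
  rw [gval_add, gval_singleEdge hR hij]

lemma gval_nonneg (hR : ∀ i j, 0 ≤ R i j) (G : Fin K → Fin K → ℕ) : 0 ≤ gval R G :=
  Finset.prod_nonneg fun _ _ => pow_nonneg (hR _ _) _

end Multigraphs

section PairExp

lemma prod_eq_mul_prod_erase_of_forall_ne {ι M : Type*} [Fintype ι] [DecidableEq ι] [CommMonoid M]
    {f g : ι → M} {i : ι} (h : ∀ j ≠ i, f j = g j) :
    ∏ j, f j = f i * ∏ j ∈ Finset.univ.erase i, g j := by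
  rw [← Finset.mul_prod_erase _ f (Finset.mem_univ i)]
  congr 1
  exact Finset.prod_congr rfl fun j hj => h j (Finset.ne_of_mem_erase hj)

variable {ι : Type*} [Fintype ι] [DecidableEq ι]

/-- `exp (-∑_{i < j} R i j tᵢ tⱼ)`, the joint generating function of the Wick exponentials of a
Gaussian vector with covariance `R`. -/
def pairExp (R : ι → ι → ℝ) (t : ι → ℝ) : ℝ :=
  Real.exp (-(∑ i, ∑ j ∈ Finset.univ.erase i, R i j * (t i * t j)) / 2)

lemma hasDerivAt_pairExp {R : ι → ι → ℝ} (hR : ∀ i j, R i j = R j i) (t : ι → ℝ) (i : ι) :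
    HasDerivAt (fun τ => pairExp R (Function.update t i τ))
      (-(∑ k ∈ Finset.univ.erase i, R i k * t k) * pairExp R t) (t i) := by
  have deriv_update := fun a => hasDerivAt_pi.1 (hasDerivAt_update t i (t i)) a
  have deriv_exponent := HasDerivAt.fun_sum (u := Finset.univ) fun a _ =>
    HasDerivAt.fun_sum (u := Finset.univ.erase a) fun b _ =>
      ((deriv_update a).fun_mul (deriv_update b)).const_mul (R a b)
  refine (deriv_exponent.fun_neg.div_const 2).exp.congr_deriv ?_
  have sum_swap : ∑ a, ∑ b ∈ Finset.univ.erase a, R a b * (t a * (Pi.single i 1 : ι → ℝ) b) =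
      ∑ a, ∑ b ∈ Finset.univ.erase a, R a b * ((Pi.single i 1 : ι → ℝ) a * t b) := by
    rw [Finset.sum_comm' (t' := Finset.univ) (s' := fun b => Finset.univ.erase b)
      (by simp [eq_comm])]
    refine Finset.sum_congr rfl fun b _ => Finset.sum_congr rfl fun a _ => ?_
    rw [hR a b, mul_comm (t a)]
  have sum_single : ∑ a, ∑ b ∈ Finset.univ.erase a, R a b * ((Pi.single i 1 : ι → ℝ) a * t b) =
      ∑ k ∈ Finset.univ.erase i, R i k * t k := by
    rw [Finset.sum_eq_single_of_mem i (Finset.mem_univ i) fun a _ ha => by simp [ha]]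
    simp
  simp only [Function.update_eq_self, mul_add, Finset.sum_add_distrib]
  rw [sum_swap, sum_single, ← pairExp]
  ring

lemma hasDerivAt_prod_pow {𝕜 : Type*} [NontriviallyNormedField 𝕜] (t : ι → 𝕜) (a : ι → ℕ) (i : ι) :
    HasDerivAt (fun τ => ∏ j, Function.update t i τ j ^ a j)
      (a i * ∏ j, t j ^ (a - Pi.single i 1 : ι → ℕ) j) (t i) := by
  have factor : ∀ τ, ∏ j, Function.update t i τ j ^ a j =
      τ ^ a i * ∏ j ∈ Finset.univ.erase i, t j ^ a j := by
    intro τ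
    rw [prod_eq_mul_prod_erase_of_forall_ne (i := i) (g := fun j => t j ^ a j) fun j hj => by
      rw [Function.update_of_ne hj], Function.update_self]
  simp only [factor]
  refine ((hasDerivAt_pow (a i) (t i)).mul_const _).congr_deriv ?_
  rw [prod_eq_mul_prod_erase_of_forall_ne (i := i) (g := fun j => t j ^ a j) fun j hj => by
    simp [hj], ← mul_assoc]
  simp

lemma prod_pow_add_single {M : Type*} [CommMonoid M] (t : ι → M) (a : ι → ℕ) (k : ι) :
    ∏ j, t j ^ (a + Pi.single k 1 : ι → ℕ) j = t k * ∏ j, t j ^ a j := by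
  rw [prod_eq_mul_prod_erase_of_forall_ne (i := k) (g := fun j => t j ^ a j) fun j hj => by
    simp [hj], ← Finset.mul_prod_erase _ _ (Finset.mem_univ k), ← mul_assoc]
  simp [pow_succ']

end PairExp

section GraphSpan

lemma exists_eq_add_single {ι : Type*} [DecidableEq ι] {n : ι → ℕ} {i : ι} (hi : 0 < n i) :
    ∃ n' : ι → ℕ, n = n' + Pi.single i 1 :=
  le_iff_exists_add'.1 (update_le_iff.2 ⟨hi, fun _ _ => Nat.zero_le _⟩)

variable {K : ℕ}

/-- A family of functions of `t` indexed by multi-indices, in which raising the `i`-th index by one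
is differentiation with respect to `tᵢ`. -/
def IsPartialDerivFamily {ι : Type*} [DecidableEq ι] (H : (ι → ℕ) → (ι → ℝ) → ℂ) : Prop :=
  ∀ n t i, HasDerivAt (fun τ => H n (Function.update t i τ)) (H (n + Pi.single i 1) t) (t i)

/-- The function `t^a · |E|` of the covariance `R` and of the variables `t`. -/
def graphTerm (a : Fin K → ℕ) (E : Fin K → Fin K → ℕ) (R : Fin K → Fin K → ℝ) (t : Fin K → ℝ) :
    ℝ :=
  (∏ j, t j ^ a j) * gval R E

/-- The linear combinations of the functions `t^a · |E|` with `deg E = n + a`. The derivative of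
order `n` of `pairExp R` is such a combination, times `pairExp R`; the combination does not depend
on `R`. -/
def graphSpan (n : Fin K → ℕ) : Submodule ℝ ((Fin K → Fin K → ℝ) → (Fin K → ℝ) → ℝ) :=
  Submodule.span ℝ {f | ∃ a E, IsMultigraph E ∧ gdeg E = n + a ∧ ∑ j, a j ≤ ∑ j, n j ∧
    f = graphTerm a E}

lemma graphTerm_mem_graphSpan {n a : Fin K → ℕ} {E : Fin K → Fin K → ℕ} (hE : IsMultigraph E)
    (hdeg : gdeg E = n + a) (ha : ∑ j, a j ≤ ∑ j, n j) : graphTerm a E ∈ graphSpan n :=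
  Submodule.subset_span ⟨a, E, hE, hdeg, ha, rfl⟩

lemma smul_graphTerm_mem_graphSpan {n a : Fin K → ℕ} {E : Fin K → Fin K → ℕ} (hE : IsMultigraph E)
    (hdeg : gdeg E = n + a) (ha : ∑ j, a j ≤ ∑ j, n j) (i : Fin K) :
    (a i : ℝ) • graphTerm (a - Pi.single i 1) E ∈ graphSpan (n + Pi.single i 1) := by
  obtain h0 | hpos := Nat.eq_zero_or_pos (a i)
  · simp [h0]
  · obtain ⟨b, rfl⟩ := exists_eq_add_single hpos
    refine Submodule.smul_mem _ _ (graphTerm_mem_graphSpan hE ?_ ?_)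
    · rw [hdeg, add_tsub_cancel_right, add_right_comm, add_assoc]
    · simp only [Pi.add_apply, Finset.sum_add_distrib, add_tsub_cancel_right] at ha ⊢
      omega

lemma graphTerm_add_singleEdge_mem_graphSpan {n a : Fin K → ℕ} {E : Fin K → Fin K → ℕ}
    (hE : IsMultigraph E) (hdeg : gdeg E = n + a) (ha : ∑ j, a j ≤ ∑ j, n j) {i k : Fin K}
    (hik : i ≠ k) :
    graphTerm (a + Pi.single k 1) (E + singleEdge i k) ∈ graphSpan (n + Pi.single i 1) := by
  refine graphTerm_mem_graphSpan (hE.add_singleEdge hik) ?_ ?_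
  · rw [gdeg_add, gdeg_singleEdge hik, hdeg]
    abel
  · simpa [Finset.sum_add_distrib] using ha

lemma exists_hasDerivAt_graphTerm_mul_pairExp {n a : Fin K → ℕ} {E : Fin K → Fin K → ℕ}
    (hE : IsMultigraph E) (hdeg : gdeg E = n + a) (ha : ∑ j, a j ≤ ∑ j, n j) (i : Fin K) :
    ∃ q ∈ graphSpan (n + Pi.single i 1), ∀ R : Fin K → Fin K → ℝ, (∀ i j, R i j = R j i) → ∀ t,
      HasDerivAt (fun τ => graphTerm a E R (Function.update t i τ) *
        pairExp R (Function.update t i τ)) (q R t * pairExp R t) (t i) := by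
  refine ⟨_, Submodule.sub_mem _ (smul_graphTerm_mem_graphSpan hE hdeg ha i)
    (Submodule.sum_mem (t := Finset.univ.erase i) _ fun k hk =>
      graphTerm_add_singleEdge_mem_graphSpan hE hdeg ha (Finset.ne_of_mem_erase hk).symm),
    fun R hR t => ?_⟩
  have deriv_prod := ((hasDerivAt_prod_pow t a i).mul_const (gval R E)).fun_mul
    (hasDerivAt_pairExp hR t i)
  refine deriv_prod.congr_deriv ?_
  have sum_terms : ∑ k ∈ Finset.univ.erase i,
      graphTerm (a + Pi.single k 1) (E + singleEdge i k) R t =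
      (∏ j, t j ^ a j) * gval R E * ∑ k ∈ Finset.univ.erase i, R i k * t k := by
    rw [Finset.mul_sum]
    refine Finset.sum_congr rfl fun k hk => ?_
    rw [graphTerm, prod_pow_add_single, gval_add_singleEdge hR E (Finset.ne_of_mem_erase hk).symm]
    ring
  simp only [Function.update_eq_self, Pi.sub_apply, Pi.smul_apply, Finset.sum_apply, smul_eq_mul,
    sum_terms]
  simp only [graphTerm, Pi.sub_apply]
  ring

lemma exists_hasDerivAt_mul_pairExp {n : Fin K → ℕ}
    {p : (Fin K → Fin K → ℝ) → (Fin K → ℝ) → ℝ} (hp : p ∈ graphSpan n) (i : Fin K) :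
    ∃ q ∈ graphSpan (n + Pi.single i 1), ∀ R : Fin K → Fin K → ℝ, (∀ i j, R i j = R j i) → ∀ t,
      HasDerivAt (fun τ => p R (Function.update t i τ) * pairExp R (Function.update t i τ))
        (q R t * pairExp R t) (t i) := by
  induction hp using Submodule.span_induction with
  | mem f hf =>
    obtain ⟨a, E, hE, hdeg, ha, rfl⟩ := hf
    exact exists_hasDerivAt_graphTerm_mul_pairExp hE hdeg ha i
  | zero =>
    refine ⟨0, Submodule.zero_mem _, fun R _ t => ?_⟩
    simpa using hasDerivAt_const (t i) (0 : ℝ)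
  | add f g _ _ hf hg =>
    obtain ⟨q₁, hq₁, h₁⟩ := hf
    obtain ⟨q₂, hq₂, h₂⟩ := hg
    refine ⟨q₁ + q₂, Submodule.add_mem _ hq₁ hq₂, fun R hR t => ?_⟩
    simpa only [Pi.add_apply, add_mul] using (h₁ R hR t).fun_add (h₂ R hR t)
  | smul c f _ hf =>
    obtain ⟨q, hq, h⟩ := hf
    refine ⟨c • q, Submodule.smul_mem _ c hq, fun R hR t => ?_⟩
    simpa only [Pi.smul_apply, smul_eq_mul, mul_assoc] using (h R hR t).const_mul c

lemma one_mem_graphSpan_zero : 1 ∈ graphSpan (0 : Fin K → ℕ) := by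
  have : graphTerm (0 : Fin K → ℕ) 0 = 1 := by
    funext R t
    simp [graphTerm, gval_zero]
  exact this ▸ graphTerm_mem_graphSpan isMultigraph_zero (by simp [gdeg_zero]) le_rfl

/-- Uniqueness of derivatives determines the whole family from its first member. -/
lemma exists_mem_graphSpan (n : Fin K → ℕ) :
    ∃ p ∈ graphSpan n, ∀ R : Fin K → Fin K → ℝ, (∀ i j, R i j = R j i) →
      ∀ H, IsPartialDerivFamily H → (∀ t, H 0 t = pairExp R t) →
      ∀ t, H n t = (p R t * pairExp R t : ℝ) := by
  induction hN : ∑ i, n i generalizing n with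
  | zero =>
    obtain rfl : n = 0 := funext fun i => Finset.sum_eq_zero_iff.1 hN i (Finset.mem_univ i)
    exact ⟨1, one_mem_graphSpan_zero, fun R _ H _ hH₀ t => by simp [hH₀]⟩
  | succ N ih =>
    obtain ⟨i, hi⟩ : ∃ i, n i ≠ 0 := by
      by_contra! h
      simp [h] at hN
    obtain ⟨n', rfl⟩ := exists_eq_add_single (Nat.pos_of_ne_zero hi)
    obtain ⟨p, hp, hpH⟩ := ih n' (by simpa [Finset.sum_add_distrib] using hN)
    obtain ⟨q, hq, hderiv⟩ := exists_hasDerivAt_mul_pairExp hp i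
    refine ⟨q, hq, fun R hR H hH hH₀ t => ?_⟩
    have hderiv' := hH n' t i
    simp only [hpH R hR H hH hH₀] at hderiv'
    exact hderiv'.unique (hderiv R hR t).ofReal_comp

end GraphSpan

section GaussianFamilies

variable {Ω ι : Type*} [MeasurableSpace Ω] {P : Measure Ω} {X : ι → Ω → ℝ} {Y : Ω → ℝ}
  {v : NNReal}

lemma IsCenteredGaussianFamily.reindex {κ : Type*} (hX : IsCenteredGaussianFamily P X)
    (f : κ → ι) : IsCenteredGaussianFamily P fun k => X (f k) := by
  classical
  intro A c
  obtain ⟨v, hv⟩ := hX (A.image f) fun i => ∑ k ∈ A with f k = i, c k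
  refine ⟨v, ?_⟩
  rw [← hv]
  congr 1
  funext ω
  rw [← Finset.sum_fiberwise_of_maps_to fun k hk => Finset.mem_image_of_mem f hk]
  refine Finset.sum_congr rfl fun i _ => ?_
  rw [Finset.sum_mul]
  exact Finset.sum_congr rfl fun k hk => by simp only [(Finset.mem_filter.1 hk).2]

lemma aemeasurable_of_map_eq_gaussianReal (h : P.map Y = gaussianReal 0 v) : AEMeasurable Y P :=
  AEMeasurable.of_map_ne_zero (h ▸ IsProbabilityMeasure.ne_zero _)

lemma memLp_of_map_eq_gaussianReal (h : P.map Y = gaussianReal 0 v) (p : ℕ) : MemLp Y p P := by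
  have memLp_id : MemLp id (p : ENNReal) (P.map Y) := by
    rw [h]
    exact_mod_cast memLp_id_gaussianReal (p : NNReal)
  exact (memLp_map_measure_iff memLp_id.1 (aemeasurable_of_map_eq_gaussianReal h)).1 memLp_id

lemma integral_sq_of_map_eq_gaussianReal (h : P.map Y = gaussianReal 0 v) :
    ∫ ω, Y ω ^ 2 ∂P = v := by
  have hvar := variance_fun_id_gaussianReal (μ := 0) (v := v)
  rw [variance_eq_integral (by fun_prop), integral_id_gaussianReal, ← h,
    integral_map (aemeasurable_of_map_eq_gaussianReal h) (by fun_prop)] at hvar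
  simpa using hvar

lemma integral_cexp_of_map_eq_gaussianReal (h : P.map Y = gaussianReal 0 v) :
    ∫ ω, Complex.exp (Complex.I * Y ω) ∂P = Real.exp (-(∫ ω, Y ω ^ 2 ∂P) / 2) := by
  have hchar := charFun_gaussianReal (μ := 0) (v := v) 1
  rw [← h, charFun_apply_real,
    integral_map (aemeasurable_of_map_eq_gaussianReal h) (by fun_prop)] at hchar
  rw [integral_sq_of_map_eq_gaussianReal h]
  simpa [mul_comm _ Complex.I, neg_div] using hchar

lemma IsCenteredGaussianFamily.memLp (hX : IsCenteredGaussianFamily P X) (i : ι) (p : ℕ) :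
    MemLp (X i) p P := by
  obtain ⟨v, hv⟩ := hX {i} 1
  exact memLp_of_map_eq_gaussianReal (by simpa using hv) p

lemma IsCenteredGaussianFamily.ofReal_mem_finiteMoments [IsFiniteMeasure P]
    (hX : IsCenteredGaussianFamily P X) (i : ι) : (fun ω => (X i ω : ℂ)) ∈ finiteMoments P :=
  fun p => (hX.memLp i p).ofReal

lemma integral_sq_sum [Fintype ι] (hX : ∀ i, MemLp (X i) 2 P) (t : ι → ℝ) :
    ∫ ω, (∑ i, t i * X i ω) ^ 2 ∂P = ∑ i, ∑ j, (∫ ω, X i ω * X j ω ∂P) * (t i * t j) := by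
  have integrable_mul : ∀ i j, Integrable (fun ω => X i ω * X j ω) P :=
    fun i j => (hX i).integrable_mul (hX j)
  have sq_expand : ∀ ω, (∑ i, t i * X i ω) ^ 2 = ∑ i, ∑ j, X i ω * X j ω * (t i * t j) := by
    intro ω
    rw [sq, Finset.sum_mul_sum]
    exact Finset.sum_congr rfl fun i _ => Finset.sum_congr rfl fun j _ => by ring
  simp only [sq_expand]
  rw [integral_finsetSum _ fun i _ => integrable_finsetSum _ fun j _ =>
    (integrable_mul i j).mul_const _]
  refine Finset.sum_congr rfl fun i _ => ?_
  rw [integral_finsetSum _ fun j _ => (integrable_mul i j).mul_const _]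
  exact Finset.sum_congr rfl fun j _ => integral_mul_const _ _

lemma prod_wickExp_zero [Fintype ι] (v x t : ι → ℝ) :
    ∏ i, wickExp (v i) (x i) 0 (t i) =
      Real.exp ((∑ i, v i * t i ^ 2) / 2) * Complex.exp (Complex.I * (∑ i, t i * x i : ℝ)) := by
  simp only [wickExp_zero]
  rw [← Complex.exp_sum, Complex.ofReal_exp, ← Complex.exp_add]
  congr 1
  push_cast
  rw [Finset.mul_sum, Finset.sum_div, ← Finset.sum_add_distrib]
  exact Finset.sum_congr rfl fun i _ => by ring

lemma exp_mul_exp_eq_pairExp [Fintype ι] [DecidableEq ι] (R : ι → ι → ℝ) (t : ι → ℝ) :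
    Real.exp ((∑ i, R i i * t i ^ 2) / 2) *
      Real.exp (-(∑ i, ∑ j, R i j * (t i * t j)) / 2) = pairExp R t := by
  have split_diag : ∀ i, ∑ j, R i j * (t i * t j) =
      R i i * t i ^ 2 + ∑ j ∈ Finset.univ.erase i, R i j * (t i * t j) := fun i => by
    rw [← Finset.add_sum_erase _ _ (Finset.mem_univ i), sq]
  rw [← Real.exp_add, pairExp]
  simp only [split_diag, Finset.sum_add_distrib]
  ring_nf

lemma IsCenteredGaussianFamily.integral_prod_wickExp_zero [Fintype ι] [DecidableEq ι]
    (hX : IsCenteredGaussianFamily P X) (t : ι → ℝ) :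
    ∫ ω, ∏ i, wickExp (∫ ω', X i ω' ^ 2 ∂P) (X i ω) 0 (t i) ∂P =
      pairExp (fun i j => ∫ ω, X i ω * X j ω ∂P) t := by
  obtain ⟨v, hv⟩ := hX Finset.univ t
  simp only [prod_wickExp_zero]
  rw [integral_const_mul, integral_cexp_of_map_eq_gaussianReal hv,
    integral_sq_sum fun i => by exact_mod_cast hX.memLp i 2]
  simp only [sq, ← exp_mul_exp_eq_pairExp, Complex.ofReal_mul]

lemma isPartialDerivFamily_integral_prod_wickExp [Fintype ι] [DecidableEq ι] [IsFiniteMeasure P]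
    (hX : ∀ i, (fun ω => (X i ω : ℂ)) ∈ finiteMoments P) {v : ι → ℝ} (hv : ∀ i, 0 < v i) :
    IsPartialDerivFamily fun n t => ∫ ω, ∏ i, wickExp (v i) (X i ω) (n i) (t i) ∂P := by
  intro n t i
  have rest_mem : (fun ω => ∏ j ∈ Finset.univ.erase i, wickExp (v j) (X j ω) (n j) (t j)) ∈
      finiteMoments P := by
    simpa only [Finset.prod_fn] using
      prod_mem fun j _ => wickExp_mem_finiteMoments (hX j) (hv j).le (n j) (t j)
  have factor : ∀ (k : ι → ℕ) (τ : ℝ), (∀ j ≠ i, k j = n j) → ∀ ω,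
      ∏ j, wickExp (v j) (X j ω) (k j) (Function.update t i τ j) =
        (∏ j ∈ Finset.univ.erase i, wickExp (v j) (X j ω) (n j) (t j)) *
          wickExp (v i) (X i ω) (k i) τ := by
    intro k τ hk ω
    rw [prod_eq_mul_prod_erase_of_forall_ne (i := i)
      (g := fun j => wickExp (v j) (X j ω) (n j) (t j)) fun j hj => by
        rw [Function.update_of_ne hj, hk j hj], Function.update_self, mul_comm]
  have deriv_integral := hasDerivAt_integral_mul_wickExp (hX i) (hv i) rest_mem (n i) (t i)
  have factor_succ := factor (n + Pi.single i 1) (t i) fun j hj => by simp [hj]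
  simp only [Function.update_eq_self] at factor_succ
  simp only [factor n _ fun _ _ => rfl, factor_succ]
  simpa only [Pi.add_apply, Pi.single_eq_same] using deriv_integral

end GaussianFamilies

section Reduction

variable {K m : ℕ} {C : ℝ} {R : Fin K → Fin K → ℝ} {Sing : Fin K → Prop} {u : Fin K → Fin K}
  {G : Fin K → Fin K → ℕ}

/-- A nonnegative symmetric kernel adapted to a clustering with representatives `u` and singleton
clusters `Sing`: up to the factor `C`, it is bounded, a path of two edges may be replaced by a
single edge, and an endpoint of an edge may be moved to its representative. -/
structure IsClusterKernel (C : ℝ) (R : Fin K → Fin K → ℝ) (Sing : Fin K → Prop)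
    (u : Fin K → Fin K) : Prop where
  symm : ∀ i j, R i j = R j i
  nonneg : ∀ i j, 0 ≤ R i j
  le : ∀ i j, R i j ≤ C
  mul_le : ∀ i j k, R i j * R i k ≤ C * R j k
  le_rep : ∀ i j, R j i ≤ C * R j (u i)
  rep_rep : ∀ i, u (u i) = u i
  sing_of_sing_rep : ∀ i, Sing (u i) → Sing i

/-- The multigraphs of degree at least `m` at every singleton. -/
structure IsAdmissible (Sing : Fin K → Prop) (m : ℕ) (G : Fin K → Fin K → ℕ) : Prop extends
    IsMultigraph G where
  le_gdeg : ∀ i, Sing i → m ≤ gdeg G i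

/-- The total degree, where the vertices which are not representatives count twice, so that it
decreases when an edge is moved to a representative. -/
def weightedDeg (u : Fin K → Fin K) (G : Fin K → Fin K → ℕ) : ℕ :=
  ∑ i, (if u i = i then 1 else 2) * gdeg G i

/-- `G'` is smaller than `G`, at the price of a factor `C` in the value. -/
structure IsReduction (C : ℝ) (R : Fin K → Fin K → ℝ) (u : Fin K → Fin K)
    (G G' : Fin K → Fin K → ℕ) : Prop where
  weightedDeg_lt : weightedDeg u G' < weightedDeg u G
  gval_le : gval R G ≤ C * gval R G'

lemma weightedDeg_add_singleEdge (u : Fin K → Fin K) (G : Fin K → Fin K → ℕ) {i j : Fin K}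
    (hij : i ≠ j) : weightedDeg u (G + singleEdge i j) =
      weightedDeg u G + ((if u i = i then 1 else 2) + (if u j = j then 1 else 2)) := by
  simp [weightedDeg, gdeg_add, gdeg_singleEdge hij, mul_add, Finset.sum_add_distrib,
    Pi.single_apply]

lemma weightedDeg_le (u : Fin K → Fin K) (G : Fin K → Fin K → ℕ) :
    weightedDeg u G ≤ 2 * ∑ i, gdeg G i := by
  rw [weightedDeg, Finset.mul_sum]
  gcongr
  split_ifs <;> omega

lemma gdeg_add_singleEdge_apply (G : Fin K → Fin K → ℕ) {i j : Fin K} (hij : i ≠ j) (a : Fin K) :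
    gdeg (G + singleEdge i j) a =
      gdeg G a + ((if a = i then 1 else 0) + (if a = j then 1 else 0)) := by
  simp [gdeg_add, gdeg_singleEdge hij, Pi.single_apply]

lemma IsClusterKernel.exists_isReduction_removeEdge (h : IsClusterKernel C R Sing u)
    (hG : IsAdmissible Sing m G) {i j : Fin K} (hij : 1 ≤ G i j) (hi : Sing i → m < gdeg G i)
    (hj : Sing j → m < gdeg G j) : ∃ G', IsAdmissible Sing m G' ∧ IsReduction C R u G G' := by
  have hne := hG.ne_of_pos hij
  obtain ⟨G', hG', rfl⟩ := hG.exists_eq_add_singleEdge hij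
  refine ⟨G', ⟨hG', fun a ha => ?_⟩, ?_, ?_⟩
  · have hdeg := hG.le_gdeg a ha
    simp only [gdeg_add_singleEdge_apply _ hne] at hdeg hi hj
    grind
  · rw [weightedDeg_add_singleEdge u G' hne]
    split_ifs <;> omega
  · rw [gval_add_singleEdge h.symm G' hne, mul_comm]
    exact mul_le_mul_of_nonneg_right (h.le i j) (gval_nonneg h.nonneg _)

lemma IsClusterKernel.exists_isReduction_shortcut (h : IsClusterKernel C R Sing u)
    (hG : IsAdmissible Sing m G) {i j k : Fin K} (hij : 1 ≤ G i j) (hik : 1 ≤ G i k) (hjk : j ≠ k)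
    (hi : Sing i → m + 2 ≤ gdeg G i) :
    ∃ G', IsAdmissible Sing m G' ∧ IsReduction C R u G G' := by
  have hne := hG.ne_of_pos hij
  have hne' := hG.ne_of_pos hik
  obtain ⟨G₁, hG₁, rfl⟩ := hG.exists_eq_add_singleEdge hij
  have hik₁ : 1 ≤ G₁ i k := by
    simp only [Pi.add_apply, singleEdge, Sym2.eq_iff] at hik
    grind
  obtain ⟨G₂, hG₂, rfl⟩ := hG₁.exists_eq_add_singleEdge hik₁
  refine ⟨G₂ + singleEdge j k, ⟨hG₂.add_singleEdge hjk, fun a ha => ?_⟩, ?_, ?_⟩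
  · have hdeg := hG.le_gdeg a ha
    simp only [gdeg_add_singleEdge_apply _ hne, gdeg_add_singleEdge_apply _ hne'] at hdeg hi
    rw [gdeg_add_singleEdge_apply _ hjk]
    grind
  · rw [weightedDeg_add_singleEdge u _ hne, weightedDeg_add_singleEdge u _ hne',
      weightedDeg_add_singleEdge u _ hjk]
    split_ifs <;> omega
  · rw [gval_add_singleEdge h.symm _ hne, gval_add_singleEdge h.symm _ hne',
      gval_add_singleEdge h.symm _ hjk]
    calc gval R G₂ * R i k * R i j = gval R G₂ * (R i j * R i k) := by ring
      _ ≤ gval R G₂ * (C * R j k) :=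
        mul_le_mul_of_nonneg_left (h.mul_le i j k) (gval_nonneg h.nonneg _)
      _ = C * (gval R G₂ * R j k) := by ring

lemma IsClusterKernel.exists_isReduction_moveToRep (h : IsClusterKernel C R Sing u)
    (hG : IsAdmissible Sing m G) {i j : Fin K} (hij : 1 ≤ G i j) (hi : ¬ Sing i) (hui : u i ≠ i)
    (hj : Sing j) : ∃ G', IsAdmissible Sing m G' ∧ IsReduction C R u G G' := by
  have hne := hG.ne_of_pos hij
  have hju : j ≠ u i := by
    rintro rfl
    exact hi (h.sing_of_sing_rep i hj)
  obtain ⟨G', hG', rfl⟩ := hG.exists_eq_add_singleEdge hij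
  refine ⟨G' + singleEdge j (u i), ⟨hG'.add_singleEdge hju, fun a ha => ?_⟩, ?_, ?_⟩
  · have hdeg := hG.le_gdeg a ha
    rw [gdeg_add_singleEdge_apply _ hne] at hdeg
    rw [gdeg_add_singleEdge_apply _ hju]
    grind
  · rw [weightedDeg_add_singleEdge u _ hne, weightedDeg_add_singleEdge u _ hju, h.rep_rep]
    simp only [hui, if_true, if_false]
    omega
  · rw [gval_add_singleEdge h.symm _ hne, gval_add_singleEdge h.symm _ hju, h.symm i j]
    calc gval R G' * R j i ≤ gval R G' * (C * R j (u i)) :=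
        mul_le_mul_of_nonneg_left (h.le_rep i j) (gval_nonneg h.nonneg _)
      _ = C * (gval R G' * R j (u i)) := by ring

lemma IsClusterKernel.exists_isReduction_or_exists_sing (h : IsClusterKernel C R Sing u)
    (hG : IsAdmissible Sing m G) {i : Fin K} (hi : 1 ≤ gdeg G i)
    (hiS : Sing i → m + 2 ≤ gdeg G i) :
    (∃ G', IsAdmissible Sing m G' ∧ IsReduction C R u G G') ∨
      gdeg G i ≤ m ∧ ∃ j, Sing j ∧ G j i = gdeg G i := by
  obtain ⟨j, hij⟩ := exists_pos_of_gdeg_pos hi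
  by_cases unique_neighbour : ∀ k, 1 ≤ G i k → k = j
  · have all_edges := eq_gdeg_of_forall_eq unique_neighbour
    by_cases hj : Sing j → m < gdeg G j
    · exact .inl (h.exists_isReduction_removeEdge hG hij (fun hS => by have := hiS hS; omega) hj)
    · push Not at hj
      rw [hG.symm] at all_edges
      exact .inr ⟨all_edges ▸ (le_gdeg G j i).trans hj.2, j, hj.1, all_edges⟩
  · push Not at unique_neighbour
    obtain ⟨k, hik, hkj⟩ := unique_neighbour
    exact .inl (h.exists_isReduction_shortcut hG hij hik hkj.symm hiS)

lemma IsClusterKernel.inOmegaStar_or_exists_isReduction (h : IsClusterKernel C R Sing u)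
    (hG : IsAdmissible Sing m G) :
    InOmegaStar Sing u m G ∨ ∃ G', IsAdmissible Sing m G' ∧ IsReduction C R u G G' := by
  by_cases hred : ∃ G', IsAdmissible Sing m G' ∧ IsReduction C R u G G'
  · exact .inr hred
  have star := fun i hi hiS =>
    (h.exists_isReduction_or_exists_sing hG (i := i) hi hiS).resolve_left hred
  refine .inl ⟨fun i hi => ?_, fun i hi _ => ?_, fun i hi hui => ?_⟩
  · have hdeg := hG.le_gdeg i hi
    by_contra! hne
    have := (star i (by omega) fun _ => by omega).1
    omega
  · obtain hzero | hpos := Nat.eq_zero_or_pos (gdeg G i)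
    · simp [hzero]
    · obtain ⟨hle, hstar⟩ := star i hpos fun hS => absurd hS hi
      exact ⟨by omega, fun _ => hstar⟩
  · by_contra hne
    obtain ⟨-, j, hj, hji⟩ := star i (Nat.pos_of_ne_zero hne) fun hS => absurd hS hi
    have hij : 1 ≤ G i j := by rw [hG.symm, hji]; omega
    exact hred (h.exists_isReduction_moveToRep hG hij hi hui hj)

lemma IsClusterKernel.exists_inOmegaStar (h : IsClusterKernel C R Sing u) (hC : 1 ≤ C)
    (hG : IsAdmissible Sing m G) :
    ∃ G', IsMultigraph G' ∧ InOmegaStar Sing u m G' ∧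
      gval R G ≤ C ^ weightedDeg u G * gval R G' := by
  induction hN : weightedDeg u G using Nat.strong_induction_on generalizing G with
  | _ N ih =>
    obtain hΩ | ⟨G', hG', hlt, hle⟩ := h.inOmegaStar_or_exists_isReduction hG
    · exact ⟨G, hG.toIsMultigraph, hΩ,
        le_mul_of_one_le_left (gval_nonneg h.nonneg _) (one_le_pow₀ hC)⟩
    · obtain ⟨G'', hG'', hΩ, hle'⟩ := ih _ (hN ▸ hlt) hG' rfl
      refine ⟨G'', hG'', hΩ, ?_⟩
      have hnonneg := gval_nonneg h.nonneg G''
      calc gval R G ≤ C * gval R G' := hle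
        _ ≤ C * (C ^ weightedDeg u G' * gval R G'') := by gcongr
        _ = C ^ (weightedDeg u G' + 1) * gval R G'' := by ring
        _ ≤ C ^ N * gval R G'' := by
          gcongr
          exact hN ▸ hlt

/-- The maximum of the values of the graphs in `Ω*`, which is `0` if `Ω*` is empty, as happens for
`K = 1` and `1 ≤ m`. -/
def maxGraphValue (R : Fin K → Fin K → ℝ) (Sing : Fin K → Prop) (u : Fin K → Fin K) (m : ℕ) : ℝ :=
  sSup {v : ℝ | ∃ G : Fin K → Fin K → ℕ, (∀ i j, G i j = G j i) ∧ (∀ i, G i i = 0) ∧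
    InOmegaStar Sing u m G ∧ v = gval R G}

lemma maxGraphValue_nonneg (hR : ∀ i j, 0 ≤ R i j) : 0 ≤ maxGraphValue R Sing u m := by
  refine Real.sSup_nonneg ?_
  rintro v ⟨G, -, -, -, rfl⟩
  exact gval_nonneg hR G

lemma gdeg_le_of_inOmegaStar (hG : InOmegaStar Sing u m G) (i : Fin K) : gdeg G i ≤ m + 1 := by
  by_cases hi : Sing i
  · have := hG.1 i hi
    omega
  · by_cases hui : u i = i
    · exact (hG.2.1 i hi hui).1
    · simp [hG.2.2 i hi hui]

lemma bddAbove_gval_inOmegaStar (R : Fin K → Fin K → ℝ) (Sing : Fin K → Prop)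
    (u : Fin K → Fin K) (m : ℕ) :
    BddAbove {v : ℝ | ∃ G : Fin K → Fin K → ℕ, (∀ i j, G i j = G j i) ∧ (∀ i, G i i = 0) ∧
      InOmegaStar Sing u m G ∧ v = gval R G} := by
  refine Set.Finite.bddAbove (Set.Finite.subset (Set.Finite.image (gval R)
    (Set.finite_Iic fun _ _ => m + 1)) ?_)
  rintro v ⟨G, -, -, hG, rfl⟩
  exact ⟨G, fun i j => (le_gdeg G i j).trans (gdeg_le_of_inOmegaStar hG i), rfl⟩

lemma IsClusterKernel.gval_le_maxGraphValue (h : IsClusterKernel C R Sing u) (hC : 1 ≤ C)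
    (hG : IsAdmissible Sing m G) :
    gval R G ≤ C ^ (2 * ∑ i, gdeg G i) * maxGraphValue R Sing u m := by
  obtain ⟨G', hG', hΩ, hle⟩ := h.exists_inOmegaStar hC hG
  have le_max : gval R G' ≤ maxGraphValue R Sing u m :=
    le_csSup (bddAbove_gval_inOmegaStar R Sing u m) ⟨G', hG'.symm, hG'.loopless, hΩ, rfl⟩
  have hnonneg := gval_nonneg h.nonneg G'
  calc gval R G ≤ C ^ weightedDeg u G * gval R G' := hle
    _ ≤ C ^ (2 * ∑ i, gdeg G i) * maxGraphValue R Sing u m := by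
      gcongr
      exact weightedDeg_le u G

end Reduction

section DerivativeBound

lemma mul_nonneg_of_mem_uIcc_zero {θ a b : ℝ} (ha : a ∈ Set.uIcc 0 θ) (hb : b ∈ Set.uIcc 0 θ) :
    0 ≤ a * b := by
  obtain hθ | hθ := le_total 0 θ
  · rw [Set.uIcc_of_le hθ] at ha hb
    exact mul_nonneg ha.1 hb.1
  · rw [Set.uIcc_of_ge hθ] at ha hb
    exact mul_nonneg_of_nonpos_of_nonpos ha.2 hb.2

lemma pairExp_le_one {ι : Type*} [Fintype ι] [DecidableEq ι] {R : ι → ι → ℝ}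
    (hR : ∀ i j, 0 ≤ R i j) {θ : ℝ} {t : ι → ℝ} (ht : ∀ j, t j ∈ Set.uIcc 0 θ) :
    pairExp R t ≤ 1 := by
  have hsum : 0 ≤ ∑ i, ∑ j ∈ Finset.univ.erase i, R i j * (t i * t j) :=
    Finset.sum_nonneg fun i _ => Finset.sum_nonneg fun j _ =>
      mul_nonneg (hR i j) (mul_nonneg_of_mem_uIcc_zero (ht i) (ht j))
  rw [pairExp, Real.exp_le_one_iff]
  linarith

variable {K m : ℕ} {C : ℝ} {n : Fin K → ℕ}

lemma IsClusterKernel.abs_graphTerm_le {R : Fin K → Fin K → ℝ} {Sing : Fin K → Prop}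
    {u : Fin K → Fin K} (h : IsClusterKernel C R Sing u) (hC : 1 ≤ C) {a : Fin K → ℕ}
    {E : Fin K → Fin K → ℕ} (hE : IsAdmissible Sing m E) {θ : ℝ} {t : Fin K → ℝ}
    (ht : ∀ j, t j ∈ Set.uIcc 0 θ) :
    |graphTerm a E R t| ≤
      C ^ (2 * ∑ i, gdeg E i) * (1 + |θ|) ^ (∑ j, a j) * maxGraphValue R Sing u m := by
  have monomial_le : |∏ j, t j ^ a j| ≤ (1 + |θ|) ^ ∑ j, a j := by
    rw [Finset.abs_prod, ← Finset.prod_pow_eq_pow_sum]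
    refine Finset.prod_le_prod (fun j _ => abs_nonneg _) fun j _ => ?_
    rw [abs_pow]
    gcongr
    linarith [abs_le_of_mem_uIcc_zero (ht j)]
  calc |graphTerm a E R t| = |∏ j, t j ^ a j| * gval R E := by
        rw [graphTerm, abs_mul, abs_of_nonneg (gval_nonneg h.nonneg E)]
    _ ≤ (1 + |θ|) ^ (∑ j, a j) * (C ^ (2 * ∑ i, gdeg E i) * maxGraphValue R Sing u m) :=
        mul_le_mul monomial_le (h.gval_le_maxGraphValue hC hE) (gval_nonneg h.nonneg E)
          (by positivity)
    _ = _ := by ring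

lemma exists_abs_le_of_mem_graphSpan (hC : 1 ≤ C) (hn : ∀ j, m ≤ n j)
    {p : (Fin K → Fin K → ℝ) → (Fin K → ℝ) → ℝ} (hp : p ∈ graphSpan n) :
    ∃ B ≥ 0, ∀ R Sing u, IsClusterKernel C R Sing u → ∀ θ t, (∀ j, t j ∈ Set.uIcc 0 θ) →
      |p R t| ≤ B * ((1 + |θ|) ^ (∑ j, n j) * maxGraphValue R Sing u m) := by
  induction hp using Submodule.span_induction with
  | mem f hf =>
    obtain ⟨a, E, hE, hdeg, ha, rfl⟩ := hf
    have hEm (Sing : Fin K → Prop) : IsAdmissible Sing m E :=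
      ⟨hE, fun i _ => hdeg ▸ (hn i).trans (Nat.le_add_right _ _)⟩
    refine ⟨C ^ (2 * ∑ i, gdeg E i), by positivity, fun R Sing u h θ t ht => ?_⟩
    have hmax := maxGraphValue_nonneg (Sing := Sing) (u := u) (m := m) h.nonneg
    have one_le : 1 ≤ 1 + |θ| := le_add_of_nonneg_right (abs_nonneg θ)
    rw [← mul_assoc]
    refine (h.abs_graphTerm_le hC (hEm Sing) ht).trans ?_
    gcongr
  | zero => exact ⟨0, le_rfl, fun R Sing u _ θ t _ => by simp⟩
  | add f g _ _ hf hg =>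
    obtain ⟨B₁, hB₁, hf⟩ := hf
    obtain ⟨B₂, hB₂, hg⟩ := hg
    refine ⟨B₁ + B₂, add_nonneg hB₁ hB₂, fun R Sing u h θ t ht => ?_⟩
    rw [add_mul]
    exact (abs_add_le _ _).trans (add_le_add (hf R Sing u h θ t ht) (hg R Sing u h θ t ht))
  | smul c f _ hf =>
    obtain ⟨B, hB, hf⟩ := hf
    refine ⟨|c| * B, by positivity, fun R Sing u h θ t ht => ?_⟩
    rw [Pi.smul_apply, Pi.smul_apply, smul_eq_mul, abs_mul, mul_assoc]
    exact mul_le_mul_of_nonneg_left (hf R Sing u h θ t ht) (abs_nonneg c)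

lemma exists_norm_partialDeriv_le (hC : 1 ≤ C) (hn : ∀ j, m ≤ n j) :
    ∃ B ≥ 0, ∀ R Sing u, IsClusterKernel C R Sing u →
      ∀ H, IsPartialDerivFamily H → (∀ t, H 0 t = pairExp R t) →
      ∀ θ t, (∀ j, t j ∈ Set.uIcc 0 θ) →
      ‖H n t‖ ≤ B * ((1 + |θ|) ^ (∑ j, n j) * maxGraphValue R Sing u m) := by
  obtain ⟨p, hp, hpH⟩ := exists_mem_graphSpan n
  obtain ⟨B, hB, hbound⟩ := exists_abs_le_of_mem_graphSpan hC hn hp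
  refine ⟨B, hB, fun R Sing u h H hH hH₀ θ t ht => ?_⟩
  have pairExp_pos : 0 < pairExp R t := Real.exp_pos _
  rw [hpH R h.symm H hH hH₀ t, Complex.norm_real, Real.norm_eq_abs, abs_mul,
    abs_of_pos pairExp_pos]
  exact (mul_le_of_le_one_right (abs_nonneg _) (pairExp_le_one h.nonneg ht)).trans
    (hbound R Sing u h θ t ht)

lemma exists_forall_norm_partialDeriv_le (K m r : ℕ) (hC : 1 ≤ C) :
    ∃ B ≥ 0, ∀ R Sing u, IsClusterKernel C R Sing u →
      ∀ H, IsPartialDerivFamily H → (∀ t, H 0 t = pairExp R t) →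
      ∀ n : Fin K → ℕ, (∀ j, n j ∈ Set.Icc m (m + r)) →
      ∀ θ t, (∀ j, t j ∈ Set.uIcc 0 θ) →
      ‖H n t‖ ≤ B * (((1 + |θ|) ^ (m + r)) ^ K * maxGraphValue R Sing u m) := by
  let orders := Finset.Icc (fun _ : Fin K => m) fun _ => m + r
  have bound (n : orders) := exists_norm_partialDeriv_le hC (Finset.mem_Icc.1 n.2).1
  choose B hB hbound using bound
  refine ⟨∑ n, B n, Finset.sum_nonneg fun n _ => hB n,
    fun R Sing u h H hH hH₀ n hn θ t ht => ?_⟩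
  have hmax := maxGraphValue_nonneg (Sing := Sing) (u := u) (m := m) h.nonneg
  have hn_mem : n ∈ orders := Finset.mem_Icc.2 ⟨fun j => (hn j).1, fun j => (hn j).2⟩
  have hB_le : B ⟨n, hn_mem⟩ ≤ ∑ n, B n :=
    Finset.single_le_sum (fun n _ => hB n) (Finset.mem_univ _)
  have hpow : (1 + |θ|) ^ (∑ j, n j) ≤ ((1 + |θ|) ^ (m + r)) ^ K := by
    rw [← pow_mul]
    refine pow_le_pow_right₀ (le_add_of_nonneg_right (abs_nonneg θ)) ?_
    simpa [mul_comm] using Finset.sum_le_card_nsmul Finset.univ n (m + r) fun j _ => (hn j).2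
  refine (hbound ⟨n, hn_mem⟩ R Sing u h H hH hH₀ θ t ht).trans ?_
  gcongr
  exact (hB _).trans hB_le

end DerivativeBound

section AnisotropicMetric

variable {d K : ℕ} {s : Fin d → ℝ} {δ : ℝ} {x : Fin K → Fin d → ℝ} {i j : Fin K}

lemma anorm_nonneg (s x : Fin d → ℝ) : 0 ≤ anorm s x :=
  Finset.sum_nonneg fun _ _ => Real.rpow_nonneg (abs_nonneg _) _

lemma anorm_zero (hs : ∀ j, s j ≠ 0) : anorm s 0 = 0 :=
  Finset.sum_eq_zero fun j _ => by
    rw [Pi.zero_apply, abs_zero, Real.zero_rpow (one_div_ne_zero (hs j))]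

lemma anorm_sub_comm (s x y : Fin d → ℝ) : anorm s (x - y) = anorm s (y - x) := by
  simp only [anorm, Pi.sub_apply, abs_sub_comm]

lemma anorm_sub_le (hs : ∀ j, 1 ≤ s j) (x y z : Fin d → ℝ) :
    anorm s (x - z) ≤ anorm s (x - y) + anorm s (y - z) := by
  rw [anorm, anorm, anorm, ← Finset.sum_add_distrib]
  refine Finset.sum_le_sum fun j _ => ?_
  have hsj : 0 < s j := zero_lt_one.trans_le (hs j)
  have exponent_nonneg : 0 ≤ 1 / s j := one_div_nonneg.2 hsj.le
  have exponent_le_one : 1 / s j ≤ 1 := (div_le_one hsj).2 (hs j)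
  calc |x j - z j| ^ (1 / s j) ≤ (|x j - y j| + |y j - z j|) ^ (1 / s j) :=
        Real.rpow_le_rpow (abs_nonneg _) (abs_sub_le _ _ _) exponent_nonneg
    _ ≤ _ := Real.rpow_add_le_add_rpow (abs_nonneg _) (abs_nonneg _) exponent_nonneg
        exponent_le_one

lemma SameCluster.symm (h : SameCluster s δ x i j) : SameCluster s δ x j i := by
  have : Std.Symm fun i j => anorm s (x i - x j) ≤ δ :=
    ⟨fun i j hij => anorm_sub_comm s (x i) (x j) ▸ hij⟩
  exact Relation.ReflTransGen.stdSymm.symm _ _ h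

/-- The graph joining the indices of points at distance at most `δ`, whose connected components are
the clusters at scale `δ`. -/
def proximityGraph (s : Fin d → ℝ) (δ : ℝ) (x : Fin K → Fin d → ℝ) : SimpleGraph (Fin K) where
  Adj i j := i ≠ j ∧ anorm s (x i - x j) ≤ δ
  symm := ⟨fun i j h => ⟨h.1.symm, anorm_sub_comm s (x i) (x j) ▸ h.2⟩⟩
  loopless := ⟨fun _ h => h.1 rfl⟩

lemma anorm_le_length_mul_of_walk (hs : ∀ j, 1 ≤ s j) (p : (proximityGraph s δ x).Walk i j) :
    anorm s (x i - x j) ≤ p.length * δ := by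
  induction p with
  | nil => simp [anorm_zero fun j => (zero_lt_one.trans_le (hs j)).ne']
  | @cons a b c hab p ih =>
    calc anorm s (x a - x c) ≤ anorm s (x a - x b) + anorm s (x b - x c) := anorm_sub_le hs _ _ _
      _ ≤ δ + p.length * δ := add_le_add hab.2 ih
      _ = (p.cons hab).length * δ := by rw [SimpleGraph.Walk.length_cons]; push_cast; ring

lemma SameCluster.reachable (h : SameCluster s δ x i j) : (proximityGraph s δ x).Reachable i j := by
  refine Relation.ReflTransGen.trans_induction_on h (fun _ => .rfl) (fun {a b} hab => ?_)
    (fun _ _ => .trans)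
  obtain rfl | hne := eq_or_ne a b
  · exact .rfl
  · exact SimpleGraph.Adj.reachable ⟨hne, hab⟩

lemma SameCluster.anorm_le (h : SameCluster s δ x i j) (hs : ∀ j, 1 ≤ s j) (hδ : 0 ≤ δ) :
    anorm s (x i - x j) ≤ K * δ := by
  obtain ⟨p, hp⟩ := h.reachable.exists_isPath
  have length_lt : p.length < K := by simpa using hp.length_lt
  refine (anorm_le_length_mul_of_walk hs p).trans ?_
  gcongr

end AnisotropicMetric

section Covariance

variable {d : ℕ} {s : Fin d → ℝ} {α Λ ε : ℝ} {R : (Fin d → ℝ) → (Fin d → ℝ) → ℝ}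

/-- The profile `(ε / (|x|_s + ε)) ^ α`, to which the covariances are comparable. -/
def decay (s : Fin d → ℝ) (α ε : ℝ) (x : Fin d → ℝ) : ℝ := (ε / (anorm s x + ε)) ^ α

lemma decay_nonneg (hε : 0 < ε) (x : Fin d → ℝ) : 0 ≤ decay s α ε x := by
  have := anorm_nonneg s x
  exact Real.rpow_nonneg (by positivity) α

lemma decay_le_one (hα : 0 < α) (hε : 0 < ε) (x : Fin d → ℝ) : decay s α ε x ≤ 1 := by
  have := anorm_nonneg s x
  exact Real.rpow_le_one (by positivity) ((div_le_one (by positivity)).2 (by linarith)) hα.le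

lemma decay_zero (hs : ∀ j, s j ≠ 0) (hε : 0 < ε) : decay s α ε 0 = 1 := by
  rw [decay, anorm_zero hs, zero_add, div_self hε.ne', Real.one_rpow]

lemma inv_rpow_le_decay (hα : 0 < α) (hε : 0 < ε) {c : ℝ} {x : Fin d → ℝ}
    (hx : anorm s x ≤ c * ε) : ((c + 1) ^ α)⁻¹ ≤ decay s α ε x := by
  have hx₀ := anorm_nonneg s x
  have hc : 0 ≤ c := nonneg_of_mul_nonneg_left (hx₀.trans hx) hε
  rw [← Real.inv_rpow (by positivity)]
  refine Real.rpow_le_rpow (by positivity) ?_ hα.le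
  rw [inv_eq_one_div, div_le_div_iff₀ (by positivity) (by positivity)]
  linarith

lemma decay_le_two_rpow_mul (hα : 0 < α) (hε : 0 < ε) {x y : Fin d → ℝ}
    (hxy : anorm s y ≤ 2 * anorm s x) : decay s α ε x ≤ 2 ^ α * decay s α ε y := by
  have hx := anorm_nonneg s x
  have hy := anorm_nonneg s y
  rw [decay, decay, ← Real.mul_rpow (by norm_num) (by positivity)]
  refine Real.rpow_le_rpow (by positivity) ?_ hα.le
  rw [← mul_div_assoc, div_le_div_iff₀ (by positivity) (by positivity)]
  nlinarith

/-- One of `|x - y|_s` and `|x - z|_s` is at least `|y - z|_s / 2`. -/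
lemma decay_sub_mul_decay_sub_le (hs : ∀ j, 1 ≤ s j) (hα : 0 < α) (hε : 0 < ε)
    (x y z : Fin d → ℝ) :
    decay s α ε (x - y) * decay s α ε (x - z) ≤ 2 ^ α * decay s α ε (y - z) := by
  have triangle := anorm_sub_le hs y x z
  rw [anorm_sub_comm s y x] at triangle
  obtain hle | hle := le_total (anorm s (x - y)) (anorm s (x - z))
  · exact (mul_le_of_le_one_left (decay_nonneg hε _) (decay_le_one hα hε _)).trans
      (decay_le_two_rpow_mul hα hε (by linarith))
  · exact (mul_le_of_le_one_right (decay_nonneg hε _) (decay_le_one hα hε _)).trans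
      (decay_le_two_rpow_mul hα hε (by linarith))

namespace CovBound

lemma le_mul_decay (h : CovBound s α Λ ε R) (hε : 0 < ε) (x y : Fin d → ℝ) :
    R x y ≤ Λ * decay s α ε (x - y) := by
  have := anorm_nonneg s (x - y)
  rw [decay, Real.div_rpow hε.le (by positivity), ← mul_div_assoc]
  exact (h x y).2

lemma decay_le_mul (h : CovBound s α Λ ε R) (hΛ : 0 < Λ) (hε : 0 < ε) (x y : Fin d → ℝ) :
    decay s α ε (x - y) ≤ Λ * R x y := by
  have := anorm_nonneg s (x - y)
  rw [decay, Real.div_rpow hε.le (by positivity), ← div_le_iff₀' hΛ, div_div, mul_comm _ Λ]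
  exact (h x y).1

lemma nonneg (h : CovBound s α Λ ε R) (hΛ : 0 < Λ) (hε : 0 < ε) (x y : Fin d → ℝ) : 0 ≤ R x y :=
  nonneg_of_mul_nonneg_right ((decay_nonneg hε _).trans (h.decay_le_mul hΛ hε x y)) hΛ

lemma le_const (h : CovBound s α Λ ε R) (hα : 0 < α) (hΛ : 0 < Λ) (hε : 0 < ε)
    (x y : Fin d → ℝ) : R x y ≤ Λ :=
  (h.le_mul_decay hε x y).trans (mul_le_of_le_one_right hΛ.le (decay_le_one hα hε _))

lemma inv_le_diag (h : CovBound s α Λ ε R) (hs : ∀ j, s j ≠ 0) (hΛ : 0 < Λ) (hε : 0 < ε)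
    (x : Fin d → ℝ) : Λ⁻¹ ≤ R x x := by
  rw [inv_le_iff_one_le_mul₀' hΛ]
  simpa only [sub_self, decay_zero hs hε] using h.decay_le_mul hΛ hε x x

lemma mul_le (h : CovBound s α Λ ε R) (hs : ∀ j, 1 ≤ s j) (hα : 0 < α) (hΛ : 0 < Λ) (hε : 0 < ε)
    (x y z : Fin d → ℝ) : R x y * R x z ≤ Λ ^ 3 * 2 ^ α * R y z := by
  calc R x y * R x z ≤ (Λ * decay s α ε (x - y)) * (Λ * decay s α ε (x - z)) :=
        mul_le_mul (h.le_mul_decay hε x y) (h.le_mul_decay hε x z) (h.nonneg hΛ hε x z)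
          (mul_nonneg hΛ.le (decay_nonneg hε _))
    _ = Λ ^ 2 * (decay s α ε (x - y) * decay s α ε (x - z)) := by ring
    _ ≤ Λ ^ 2 * (2 ^ α * decay s α ε (y - z)) := by
        gcongr Λ ^ 2 * ?_
        exact decay_sub_mul_decay_sub_le hs hα hε x y z
    _ ≤ Λ ^ 2 * (2 ^ α * (Λ * R y z)) := by
        gcongr
        exact h.decay_le_mul hΛ hε y z
    _ = Λ ^ 3 * 2 ^ α * R y z := by ring

lemma one_le_mul_of_sameCluster (h : CovBound s α Λ ε R) (hs : ∀ j, 1 ≤ s j) (hα : 0 < α)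
    (hΛ : 0 < Λ) (hε : 0 < ε) {L : ℝ} (hL : 0 ≤ L) {K : ℕ} {x : Fin K → Fin d → ℝ} {i j : Fin K}
    (hij : SameCluster s (L * ε) x i j) : 1 ≤ Λ * (K * L + 1) ^ α * R (x i) (x j) := by
  have dist_le : anorm s (x i - x j) ≤ K * L * ε :=
    (hij.anorm_le hs (by positivity)).trans_eq (mul_assoc _ _ _).symm
  have hR := (inv_rpow_le_decay hα hε dist_le).trans (h.decay_le_mul hΛ hε (x i) (x j))
  rw [inv_le_iff_one_le_mul₀' (by positivity)] at hR
  linarith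

lemma isClusterKernel (h : CovBound s α Λ ε R) (hR : ∀ x y, R x y = R y x) (hs : ∀ j, 1 ≤ s j)
    (hα : 0 < α) (hΛ : 1 ≤ Λ) (hε : 0 < ε) {L : ℝ} (hL : 0 ≤ L) {K : ℕ}
    {x : Fin K → Fin d → ℝ} {u : Fin K → Fin K} (hu : ∀ i, SameCluster s (L * ε) x i (u i))
    (hu' : ∀ i j, SameCluster s (L * ε) x i j → u i = u j) :
    IsClusterKernel (Λ * (K * L + 1) ^ α * (Λ ^ 3 * 2 ^ α)) (fun i j => R (x i) (x j))
      (IsSingletonIdx s (L * ε) x) u := by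
  have hΛ₀ : 0 < Λ := zero_lt_one.trans_le hΛ
  have cluster_const : Λ ≤ Λ * (K * L + 1) ^ α :=
    le_mul_of_one_le_right hΛ₀.le (Real.one_le_rpow (by simpa using by positivity) hα.le)
  have path_const : 1 ≤ Λ ^ 3 * 2 ^ α :=
    one_le_mul_of_one_le_of_one_le (one_le_pow₀ hΛ) (Real.one_le_rpow one_le_two hα.le)
  have hnonneg := h.nonneg hΛ₀ hε
  refine ⟨fun i j => hR _ _, fun i j => hnonneg _ _, fun i j => ?_, fun i j k => ?_,
    fun i j => ?_, fun i => (hu' _ _ (hu i)).symm, fun i hi => ?_⟩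
  · exact ((h.le_const hα hΛ₀ hε _ _).trans cluster_const).trans
      (le_mul_of_one_le_right (by positivity) path_const)
  · refine (h.mul_le hs hα hΛ₀ hε (x i) (x j) (x k)).trans
      (mul_le_mul_of_nonneg_right ?_ (hnonneg _ _))
    exact le_mul_of_one_le_left (by positivity) (hΛ.trans cluster_const)
  · calc R (x j) (x i) ≤ (Λ * (K * L + 1) ^ α * R (x i) (x (u i))) * R (x j) (x i) :=
          le_mul_of_one_le_left (hnonneg _ _)
            (h.one_le_mul_of_sameCluster hs hα hΛ₀ hε hL (hu i))
      _ = Λ * (K * L + 1) ^ α * (R (x i) (x j) * R (x i) (x (u i))) := by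
          rw [hR (x j) (x i)]; ring
      _ ≤ Λ * (K * L + 1) ^ α * (Λ ^ 3 * 2 ^ α * R (x j) (x (u i))) := by
          gcongr Λ * (K * L + 1) ^ α * ?_
          exact h.mul_le hs hα hΛ₀ hε _ _ _
      _ = _ := (mul_assoc _ _ _).symm
  · have hui := hi i (hu i).symm
    rwa [← hui] at hi

end CovBound

end Covariance

section MomentBound

lemma exists_norm_integral_prod_iteratedDeriv_hFun_le (K m r : ℕ) {C Λ : ℝ} (hC : 1 ≤ C)
    (hΛ : 1 ≤ Λ) :
    ∃ B ≥ 0, ∀ {Ω : Type*} [MeasurableSpace Ω] {P : Measure Ω} [IsProbabilityMeasure P]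
      {X : Fin K → Ω → ℝ}, IsCenteredGaussianFamily P X →
      (∀ j, ∫ ω, X j ω ^ 2 ∂P ∈ Set.Icc Λ⁻¹ Λ) →
      ∀ {Sing u}, IsClusterKernel C (fun i j => ∫ ω, X i ω * X j ω ∂P) Sing u → ∀ θ,
      ‖∫ ω, ∏ j, iteratedDeriv r (fun t => hFun m t (X j ω) (∫ ω', X j ω' ^ 2 ∂P)) θ ∂P‖ ≤
        B * maxGraphValue (fun i j => ∫ ω, X i ω * X j ω ∂P) Sing u m := by
  obtain ⟨B, hB, norm_partialDeriv_le⟩ := exists_forall_norm_partialDeriv_le K m r hC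
  obtain ⟨D, hFunWeight_le⟩ := exists_hFunWeight_mul_le m r (m + r) hΛ
  have hD : 0 ≤ D := (mul_nonneg (hFunWeight_nonneg m r 1 0) (by positivity)).trans
    (hFunWeight_le 1 ⟨inv_le_one_of_one_le₀ hΛ, hΛ⟩ 0)
  refine ⟨D ^ K * B, by positivity, fun {Ω _ P _ X} hX hvar {Sing u} hker θ => ?_⟩
  have hvar_pos (j : Fin K) := (inv_pos.2 (zero_lt_one.trans_le hΛ)).trans_le (hvar j).1
  have hmoments := hX.ofReal_mem_finiteMoments
  have taylor_bound := norm_integral_prod_iteratedDeriv_hFun_le (m := m) (r := r) (θ := θ)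
    hmoments hvar_pos fun n hn t ht => norm_partialDeriv_le _ Sing u hker _
      (isPartialDerivFamily_integral_prod_wickExp hmoments hvar_pos)
      hX.integral_prod_wickExp_zero n hn θ t ht
  have weights_le : (∏ j, hFunWeight m r (∫ ω, X j ω ^ 2 ∂P) θ) * ((1 + |θ|) ^ (m + r)) ^ K ≤
      D ^ K := by
    calc _ = ∏ j, hFunWeight m r (∫ ω, X j ω ^ 2 ∂P) θ * (1 + |θ|) ^ (m + r) := by
          simp [Finset.prod_mul_distrib]
      _ ≤ ∏ _j : Fin K, D := Finset.prod_le_prod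
          (fun j _ => mul_nonneg (hFunWeight_nonneg m r _ θ) (by positivity))
          fun j _ => hFunWeight_le _ (hvar j) θ
      _ = D ^ K := by simp
  have hmax := maxGraphValue_nonneg (Sing := Sing) (u := u) (m := m) hker.nonneg
  calc _ ≤ _ := taylor_bound
    _ = (∏ j, hFunWeight m r (∫ ω, X j ω ^ 2 ∂P) θ) * ((1 + |θ|) ^ (m + r)) ^ K *
        (B * maxGraphValue (fun i j => ∫ ω, X i ω * X j ω ∂P) Sing u m) := by ring
    _ ≤ D ^ K * (B * maxGraphValue (fun i j => ∫ ω, X i ω * X j ω ∂P) Sing u m) := by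
        gcongr
    _ = _ := (mul_assoc _ _ _).symm

end MomentBound

theorem stmt9_general {d : ℕ} {s : Fin d → ℝ} (hs : ∀ j, 1 ≤ s j) {α Λ L : ℝ} (hα : 0 < α)
    (hΛ : 1 ≤ Λ) (hL : 0 ≤ L) (K m r : ℕ) :
    ∃ C > 0, ∀ ε > 0, ∀ (Ω : Type*) (_ : MeasurableSpace Ω) (P : Measure Ω),
      IsProbabilityMeasure P → ∀ Φ : (Fin d → ℝ) → Ω → ℝ,
        IsCenteredGaussianFamily P Φ →
        CovBound s α Λ ε (fun x y => ∫ ω, Φ x ω * Φ y ω ∂P) →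
        ∀ (θ : ℝ) (x : Fin K → Fin d → ℝ) (u : Fin K → Fin K),
          (∀ i, SameCluster s (L * ε) x i (u i)) →
          (∀ i j, SameCluster s (L * ε) x i j → u i = u j) →
          ‖∫ ω, ∏ j, iteratedDeriv r
              (fun t => hFun m t (Φ (x j) ω) (∫ ω', Φ (x j) ω' ^ 2 ∂P)) θ ∂P‖ ≤
            C * maxGraphValue (fun i j => ∫ ω, Φ (x i) ω * Φ (x j) ω ∂P)
              (IsSingletonIdx s (L * ε) x) u m := by
  have hΛ₀ : 0 < Λ := zero_lt_one.trans_le hΛ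
  have cluster_const : 1 ≤ Λ * (K * L + 1) ^ α * (Λ ^ 3 * 2 ^ α) :=
    one_le_mul_of_one_le_of_one_le
      (one_le_mul_of_one_le_of_one_le hΛ (Real.one_le_rpow (by simpa using by positivity) hα.le))
      (one_le_mul_of_one_le_of_one_le (one_le_pow₀ hΛ) (Real.one_le_rpow one_le_two hα.le))
  obtain ⟨B, hB, bound⟩ := exists_norm_integral_prod_iteratedDeriv_hFun_le K m r cluster_const hΛ
  refine ⟨B + 1, by positivity, fun ε hε Ω _ P _ Φ hΦ hcov θ x u hu hu' => ?_⟩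
  have hker := hcov.isClusterKernel (fun y z => by simp only [mul_comm]) hs hα hΛ hε hL hu hu'
  have hvar (j : Fin K) : ∫ ω, Φ (x j) ω ^ 2 ∂P ∈ Set.Icc Λ⁻¹ Λ := by
    simp only [sq]
    exact ⟨hcov.inv_le_diag (fun j => (zero_lt_one.trans_le (hs j)).ne') hΛ₀ hε (x j),
      hcov.le_const hα hΛ₀ hε (x j) (x j)⟩
  exact (bound (hΦ.reindex x) hvar hker θ).trans
    (mul_le_mul_of_nonneg_right (by linarith) (maxGraphValue_nonneg hker.nonneg))

/-- Proposition 2.7: there are `C, L > 0` depending only on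
`d, s, α, Λ, K, m, r` such that
`|E ∏_j ∂_θ^r 𝓗_m(e^{iθΦ_ε(x_j)})| ≤ C · max_{Γ ∈ Ω*} |Γ|`, where `Ω*` is taken with respect
to the clusters of `x₁,…,x_K` at scale `Lε` for any fixed choice of representatives. -/
theorem stmt9 (d : ℕ) (hd : 1 ≤ d) (s : Fin d → ℝ) (hs : ∀ j, 1 ≤ s j)
    (α Λ : ℝ) (hα : 0 < α) (hα' : α < ∑ j, s j) (hΛ : 1 < Λ)
    (K : ℕ) (hK : 1 ≤ K) (m r : ℕ) :
    ∃ C > 0, ∃ L > 0, ∀ ε ∈ Set.Ioo (0:ℝ) 1,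
      ∀ (Ω : Type) (_ : MeasurableSpace Ω) (P : Measure Ω), IsProbabilityMeasure P →
      ∀ Φ : (Fin d → ℝ) → Ω → ℝ,
        IsCenteredGaussianFamily P Φ →
        CovBound s α Λ ε (fun x y => ∫ ω, Φ x ω * Φ y ω ∂P) →
        ∀ (θ : ℝ) (x : Fin K → Fin d → ℝ) (u : Fin K → Fin K),
          (∀ i, SameCluster s (L * ε) x i (u i)) →
          (∀ i j, SameCluster s (L * ε) x i j → u i = u j) →
          ‖∫ ω, ∏ j, iteratedDeriv r
              (fun t => hFun m t (Φ (x j) ω) (∫ ω', Φ (x j) ω' ^ 2 ∂P)) θ ∂P‖ ≤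
            C * sSup {v : ℝ | ∃ G : Fin K → Fin K → ℕ,
              (∀ i j, G i j = G j i) ∧ (∀ i, G i i = 0) ∧
              InOmegaStar (IsSingletonIdx s (L * ε) x) u m G ∧
              v = gval (fun i j => ∫ ω, Φ (x i) ω * Φ (x j) ω ∂P) G} :=
  let ⟨C, hC, h⟩ := stmt9_general hs hα hΛ.le zero_le_one K m r
  ⟨C, hC, 1, one_pos, fun ε hε => h ε hε.1⟩
end
end

section
/- Let α ∈ (0,|s|) and Λ > 0. Let G : ℝ^d ∖ {0} → ℝ be measurable with 0 ≤ G(x) ≤ Λ |x|_s^{−α} for all x ≠ 0, and suppose there exists a locally integrable g : ℝ^d → ℝ such that ∫_Ω |ε^α G(ε^{s₁}x₁, …, ε^{s_d}x_d) − g(x)| dx → 0 as ε → 0 for every bounded measurable set Ω ⊂ ℝ^d. Then for every continuous compactly supported ρ : ℝ^d → ℝ, one has ε^α ∫∫_{ℝ^d×ℝ^d} G(x−y) ρ_ε(x) ρ_ε(y) dx dy → ∫∫_{ℝ^d×ℝ^d} g(x−y) ρ(x) ρ(y) dx dy as ε → 0, where ρ_ε(x) := ε^{−|s|} ρ(x₁/ε^{s₁},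 …, x_d/ε^{s_d}). -/
/-!
Substituting `x ↦ ε^s x` turns `ε^α ∫∫ G(x - y) ρ_ε(x) ρ_ε(y)` into `∫∫ G_ε(x - y) ρ(x) ρ(y)` with
`G_ε(z) = ε^α G(ε^s z)`. Only the values of the kernel on the compact set `supp ρ - supp ρ` matter,
and there Young's inequality bounds the change of the form by the `L¹` distance of the kernels, so
the convergence `G_ε → g` in `L¹` of that set suffices. The kernel `G` is locally integrable because
weighted AM-GM gives `∏ⱼ |xⱼ| ^ (1 / |s|) ≤ |x|_s`, so that `|x|_s ^ (-α)` is dominated by a product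
of one-dimensional powers of exponent `-α / |s| > -1`.
-/

open MeasureTheory Filter

noncomputable section

def scaled {d : ℕ} (s : Fin d → ℝ) (lam : ℝ) (φ : (Fin d → ℝ) → ℝ) (x : Fin d → ℝ) : ℝ :=
  lam ^ (-(∑ j, s j)) * φ (fun j => x j / lam ^ (s j))

open scoped Topology ENNReal Pointwise Convolution

section KernelForm

variable {E : Type*} [AddGroup E] [MeasurableSpace E] {μ : Measure E} {h k ρ σ : E → ℝ}

/-- The bilinear form with convolution kernel `h` tested against `ρ` and `σ`: when `h` is the
covariance function of a stationary field, the covariance of the field smeared by `ρ` and by `σ`.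
It is an iterated Bochner integral, hence can take the junk value `0` when the integrand is not
integrable. -/
def kernelForm (μ : Measure E) (h ρ σ : E → ℝ) : ℝ :=
  ∫ x, ∫ y, h (x - y) * ρ x * σ y ∂μ ∂μ

theorem kernelForm_const_mul (a : ℝ) (h ρ σ : E → ℝ) :
    kernelForm μ (fun x => a * h x) ρ σ = a * kernelForm μ h ρ σ := by
  simp only [kernelForm, mul_assoc, integral_const_mul]

theorem kernelForm_indicator {B : Set E} (hB : ρ.support - σ.support ⊆ B) (h : E → ℝ) :
    kernelForm μ (B.indicator h) ρ σ = kernelForm μ h ρ σ := by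
  unfold kernelForm
  congr! 4 with x y
  by_cases hx : ρ x = 0
  · simp [hx]
  by_cases hy : σ y = 0
  · simp [hy]
  rw [Set.indicator_of_mem (hB (Set.sub_mem_sub hx hy))]

variable [MeasurableAdd₂ E] [MeasurableNeg E] [SFinite μ] [μ.IsAddRightInvariant]

theorem integrable_kernelForm_integrand {M : ℝ} (hh : Integrable h μ)
    (hρ : AEStronglyMeasurable ρ μ) (hM : ∀ᵐ x ∂μ, |ρ x| ≤ M) (hσ : Integrable σ μ) :
    Integrable (fun p : E × E => h (p.1 - p.2) * ρ p.1 * σ p.2) (μ.prod μ) := by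
  have hMfst : ∀ᵐ p ∂μ.prod μ, ‖ρ p.1‖ ≤ M := Measure.quasiMeasurePreserving_fst.ae hM
  have hconv := hσ.convolution_integrand (ContinuousLinearMap.mul ℝ ℝ) hh
  refine (hconv.mul_bdd hρ.comp_fst hMfst).congr (.of_forall fun p => ?_)
  simp only [ContinuousLinearMap.mul_apply']
  ring

theorem kernelForm_sub {M : ℝ} (hh : Integrable h μ) (hk : Integrable k μ)
    (hρ : AEStronglyMeasurable ρ μ) (hM : ∀ᵐ x ∂μ, |ρ x| ≤ M) (hσ : Integrable σ μ) :
    kernelForm μ (h - k) ρ σ = kernelForm μ h ρ σ - kernelForm μ k ρ σ := by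
  have hh' := integrable_kernelForm_integrand hh hρ hM hσ
  have hk' := integrable_kernelForm_integrand hk hρ hM hσ
  unfold kernelForm
  rw [← integral_integral_sub hh' hk']
  simp only [Pi.sub_apply, sub_mul]

theorem abs_kernelForm_le {M : ℝ} (hh : Integrable h μ) (hM : ∀ᵐ x ∂μ, |ρ x| ≤ M)
    (hσ : Integrable σ μ) :
    |kernelForm μ h ρ σ| ≤ M * ((∫ x, |σ x| ∂μ) * ∫ x, |h x| ∂μ) := by
  let L := ContinuousLinearMap.mul ℝ ℝ
  let conv : E → ℝ := (fun x => |σ x|) ⋆[L, μ] fun x => |h x|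
  have hconv : Integrable conv μ := hσ.abs.integrable_convolution L hh.abs
  have hinner : ∀ᵐ x ∂μ, ‖∫ y, h (x - y) * ρ x * σ y ∂μ‖ ≤ M * conv x := by
    filter_upwards [hM] with x hx
    calc ‖∫ y, h (x - y) * ρ x * σ y ∂μ‖
        ≤ ∫ y, ‖h (x - y) * ρ x * σ y‖ ∂μ := norm_integral_le_integral_norm _
      _ = |ρ x| * conv x := by
        simp only [conv, convolution_def, L, ContinuousLinearMap.mul_apply', norm_mul,
          Real.norm_eq_abs, ← integral_const_mul]
        congr! 2
        ring
      _ ≤ M * conv x :=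
        mul_le_mul_of_nonneg_right hx <|
          integral_nonneg fun y => mul_nonneg (abs_nonneg _) (abs_nonneg _)
  calc |kernelForm μ h ρ σ| ≤ ∫ x, M * conv x ∂μ :=
        norm_integral_le_of_norm_le (hconv.const_mul M) hinner
    _ = M * ((∫ x, |σ x| ∂μ) * ∫ x, |h x| ∂μ) := by
        rw [integral_const_mul, integral_convolution L hσ.abs hh.abs]
        rfl

theorem tendsto_kernelForm {ι : Type*} {l : Filter ι} {H : ι → E → ℝ} {B : Set E}
    (hB : MeasurableSet B) (hsupp : ρ.support - σ.support ⊆ B)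
    (hH : ∀ᶠ i in l, IntegrableOn (H i) B μ) (hh : IntegrableOn h B μ)
    (hlim : Tendsto (fun i => ∫ x in B, |H i x - h x| ∂μ) l (𝓝 0))
    (hρ : MemLp ρ ∞ μ) (hσ : Integrable σ μ) :
    Tendsto (fun i => kernelForm μ (H i) ρ σ) l (𝓝 (kernelForm μ h ρ σ)) := by
  obtain ⟨M, hM⟩ : ∃ M : ℝ, ∀ᵐ x ∂μ, |ρ x| ≤ M := by
    have hfin : eLpNormEssSup ρ μ < ∞ := by simpa only [eLpNorm_exponent_top] using hρ.2
    obtain ⟨M, hM⟩ := eLpNormEssSup_lt_top_iff_isBoundedUnder.1 hfin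
    exact ⟨M, eventually_map.1 hM⟩
  have hbound : ∀ᶠ i in l, ‖kernelForm μ (H i) ρ σ - kernelForm μ h ρ σ‖ ≤
      M * ((∫ x, |σ x| ∂μ) * ∫ x in B, |H i x - h x| ∂μ) := by
    filter_upwards [hH] with i hi
    have hi' := hi.integrable_indicator hB
    have hh' := hh.integrable_indicator hB
    calc ‖kernelForm μ (H i) ρ σ - kernelForm μ h ρ σ‖
        = |kernelForm μ (B.indicator (H i) - B.indicator h) ρ σ| := by
          rw [kernelForm_sub hi' hh' hρ.aestronglyMeasurable hM hσ, kernelForm_indicator hsupp,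
            kernelForm_indicator hsupp, Real.norm_eq_abs]
      _ ≤ M * ((∫ x, |σ x| ∂μ) * ∫ x, |(B.indicator (H i) - B.indicator h) x| ∂μ) :=
          abs_kernelForm_le (hi'.sub hh') hM hσ
      _ = M * ((∫ x, |σ x| ∂μ) * ∫ x in B, |H i x - h x| ∂μ) := by
          rw [← Set.indicator_sub', ← integral_indicator hB]
          simp only [← Real.norm_eq_abs, norm_indicator_eq_indicator_norm, Pi.sub_apply]
  rw [tendsto_iff_norm_sub_tendsto_zero]
  refine squeeze_zero' (.of_forall fun _ => norm_nonneg _) hbound ?_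
  simpa only [mul_zero] using (hlim.const_mul (∫ x, |σ x| ∂μ)).const_mul M

end KernelForm

section DiagonalDilation

variable {ι : Type*} [Fintype ι] {c : ι → ℝ}

/-- The anisotropic dilation `(xⱼ)ⱼ ↦ (cⱼ xⱼ)ⱼ`, as a homeomorphism so that measures and local
integrability can be transported along it. -/
def diagonalDilation (c : ι → ℝ) (hc : ∀ j, c j ≠ 0) : (ι → ℝ) ≃ₜ (ι → ℝ) :=
  .piCongrRight fun j => .mulLeft₀ (c j) (hc j)

theorem map_diagonalDilation_volume (hc : ∀ j, c j ≠ 0) :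
    Measure.map (diagonalDilation c hc) volume = ENNReal.ofReal |(∏ j, c j)⁻¹| • volume := by
  classical
  have hdet : (Matrix.diagonal c).det ≠ 0 := by
    rw [Matrix.det_diagonal]
    exact Finset.prod_ne_zero_iff.2 fun j _ => hc j
  have hcoe : ⇑(Matrix.toLin' (Matrix.diagonal c)) = diagonalDilation c hc := by
    ext x j
    exact Matrix.mulVec_diagonal c x j
  rw [← hcoe, Real.map_matrix_volume_pi_eq_smul_volume_pi hdet, Matrix.det_diagonal]

theorem integral_comp_diagonal {F : Type*} [NormedAddCommGroup F] [NormedSpace ℝ F]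
    (hc : ∀ j, c j ≠ 0) (f : (ι → ℝ) → F) :
    ∫ x : ι → ℝ, f (fun j => c j * x j) = |(∏ j, c j)⁻¹| • ∫ x, f x := by
  rw [← ENNReal.toReal_ofReal (abs_nonneg (∏ j, c j)⁻¹), ← integral_smul_measure,
    ← map_diagonalDilation_volume hc,
    (diagonalDilation c hc).measurableEmbedding.integral_map]
  rfl

theorem locallyIntegrable_comp_diagonal {F : Type*} [NormedAddCommGroup F] (hc : ∀ j, c j ≠ 0)
    {f : (ι → ℝ) → F} (hf : LocallyIntegrable f) :
    LocallyIntegrable fun x : ι → ℝ => f fun j => c j * x j := by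
  refine (locallyIntegrable_map_homeomorph (diagonalDilation c hc)).1 fun x => ?_
  obtain ⟨U, hU, hfU⟩ := hf x
  refine ⟨U, hU, ?_⟩
  rw [IntegrableOn, map_diagonalDilation_volume, Measure.restrict_smul]
  exact hfU.smul_measure ENNReal.ofReal_ne_top

theorem kernelForm_scaled {d : ℕ} (s : Fin d → ℝ) (G ρ σ : (Fin d → ℝ) → ℝ) {ε : ℝ}
    (hε : 0 < ε) :
    kernelForm volume G (scaled s ε ρ) (scaled s ε σ) =
      kernelForm volume (fun x => G fun j => ε ^ s j * x j) ρ σ := by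
  have hc : ∀ j, ε ^ s j ≠ 0 := fun j => (Real.rpow_pos_of_pos hε _).ne'
  have hεs : 0 < ε ^ ∑ j, s j := Real.rpow_pos_of_pos hε _
  have hsubst (f : (Fin d → ℝ) → ℝ) :
      ∫ x, f x = ε ^ (∑ j, s j) * ∫ x : Fin d → ℝ, f fun j => ε ^ s j * x j := by
    rw [integral_comp_diagonal hc, ← Real.rpow_sum_of_pos hε, abs_of_pos (inv_pos.2 hεs),
      smul_eq_mul, mul_inv_cancel_left₀ hεs.ne']
  have hscaled (φ : (Fin d → ℝ) → ℝ) (x : Fin d → ℝ) :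
      scaled s ε φ (fun j => ε ^ s j * x j) = (ε ^ ∑ j, s j)⁻¹ * φ x := by
    simp only [scaled, mul_div_cancel_left₀ _ (hc _), Real.rpow_neg hε.le]
  unfold kernelForm
  rw [hsubst, ← integral_const_mul]
  refine integral_congr_ae (.of_forall fun x => ?_)
  beta_reduce
  rw [hsubst, ← integral_const_mul, ← integral_const_mul]
  refine integral_congr_ae (.of_forall fun y => ?_)
  beta_reduce
  have hsub : ((fun j => ε ^ s j * x j) - fun j => ε ^ s j * y j) =
      fun j => ε ^ s j * (x - y) j := funext fun j => (mul_sub _ _ _).symm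
  rw [hscaled, hscaled, hsub]
  field_simp

end DiagonalDilation

section AnisotropicNorm

theorem locallyIntegrable_prod_apply {ι 𝕜 : Type*} [Fintype ι] [RCLike 𝕜] {X : ι → Type*}
    [∀ j, TopologicalSpace (X j)] [∀ j, MeasurableSpace (X j)] {μ : ∀ j, Measure (X j)}
    [∀ j, SigmaFinite (μ j)] {f : ∀ j, X j → 𝕜} (hf : ∀ j, LocallyIntegrable (f j) (μ j)) :
    LocallyIntegrable (fun x : ∀ j, X j => ∏ j, f j (x j)) (Measure.pi μ) := by
  intro x
  choose U hU hfU using fun j => hf j (x j)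
  refine ⟨Set.univ.pi U, set_pi_mem_nhds Set.finite_univ fun j _ => hU j, ?_⟩
  rw [IntegrableOn, Measure.restrict_pi_pi]
  exact Integrable.fintype_prod_dep hfU

theorem locallyIntegrable_prod_abs_rpow {ι : Type*} [Fintype ι] {r : ι → ℝ}
    (hr : ∀ j, -1 < r j) : LocallyIntegrable fun x : ι → ℝ => ∏ j, |x j| ^ r j := by
  refine locallyIntegrable_prod_apply (μ := fun _ : ι => (volume : Measure ℝ))
    (f := fun j t => |t| ^ r j) fun j => ?_
  refine locallyIntegrable_of_norm_le_rpow (C := 1) (α := -r j) (by simp) ?_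
    (.of_forall fun t => ?_) (measurable_abs.pow_const _).aestronglyMeasurable
  · simpa using neg_lt.1 (hr j)
  · rw [neg_neg, one_mul, Real.norm_eq_abs, Real.norm_eq_abs, abs_of_nonneg (by positivity)]

variable {d : ℕ} {s : Fin d → ℝ} {α : ℝ}

theorem continuous_anorm (hs : ∀ j, 0 ≤ s j) : Continuous (anorm s) :=
  continuous_finsetSum _ fun j _ =>
    (continuous_apply j).abs.rpow_const fun _ => .inr (one_div_nonneg.2 (hs j))

theorem prod_rpow_le_anorm (hs : ∀ j, 0 < s j) (hS : 0 < ∑ j, s j) (x : Fin d → ℝ) :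
    ∏ j, |x j| ^ (1 / ∑ i, s i) ≤ anorm s x := by
  let w : Fin d → ℝ := fun j => s j / ∑ i, s i
  have hw0 : ∀ j, 0 ≤ w j := fun j => div_nonneg (hs j).le hS.le
  have hwsum : ∑ j, w j = 1 := by rw [← Finset.sum_div, div_self hS.ne']
  have hw1 : ∀ j, w j ≤ 1 := fun j =>
    hwsum ▸ Finset.single_le_sum (fun i _ => hw0 i) (Finset.mem_univ j)
  have hz : ∀ j, 0 ≤ |x j| ^ (1 / s j) := fun j => by positivity
  calc ∏ j, |x j| ^ (1 / ∑ i, s i)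
      = ∏ j, (|x j| ^ (1 / s j)) ^ w j := by
        refine Finset.prod_congr rfl fun j _ => ?_
        rw [← Real.rpow_mul (abs_nonneg _), one_div_mul_eq_div, div_div_cancel_left' (hs j).ne',
          one_div]
    _ ≤ ∑ j, w j * |x j| ^ (1 / s j) :=
        Real.geom_mean_le_arith_mean_weighted _ _ _ (fun j _ => hw0 j) hwsum fun j _ => hz j
    _ ≤ anorm s x := Finset.sum_le_sum fun j _ => mul_le_of_le_one_left (hz j) (hw1 j)

theorem anorm_rpow_neg_le (hs : ∀ j, 0 < s j) (hS : 0 < ∑ j, s j) (hα : 0 ≤ α)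
    {x : Fin d → ℝ} (hx : ∀ j, x j ≠ 0) :
    anorm s x ^ (-α) ≤ ∏ j, |x j| ^ (-(α / ∑ i, s i)) := by
  have hpos : 0 < ∏ j, |x j| ^ (1 / ∑ i, s i) :=
    Finset.prod_pos fun j _ => Real.rpow_pos_of_pos (abs_pos.2 (hx j)) _
  calc anorm s x ^ (-α) ≤ (∏ j, |x j| ^ (1 / ∑ i, s i)) ^ (-α) :=
        Real.rpow_le_rpow_of_nonpos hpos (prod_rpow_le_anorm hs hS x) (neg_nonpos.2 hα)
    _ = ∏ j, |x j| ^ (-(α / ∑ i, s i)) := by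
        rw [← Real.finsetProd_rpow _ _ fun j _ => by positivity]
        refine Finset.prod_congr rfl fun j _ => ?_
        rw [← Real.rpow_mul (abs_nonneg _), one_div_mul_eq_div, neg_div]

theorem ae_forall_apply_ne_zero {ι : Type*} [Fintype ι] : ∀ᵐ x : ι → ℝ, ∀ j, x j ≠ 0 :=
  ae_all_iff.2 fun j => Measure.ae_eval_ne (μ := fun _ : ι => (volume : Measure ℝ)) j 0

theorem locallyIntegrable_anorm_rpow_neg (hs : ∀ j, 0 < s j) (hα : α < ∑ j, s j) :
    LocallyIntegrable fun x : Fin d → ℝ => anorm s x ^ (-α) := by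
  have hcont : Continuous (anorm s) := continuous_anorm fun j => (hs j).le
  rcases le_or_gt α 0 with hα0 | hα0
  · exact (hcont.rpow_const fun _ => .inr (neg_nonneg.2 hα0)).locallyIntegrable
  have hS : 0 < ∑ j, s j := hα0.trans hα
  have hr : -1 < -(α / ∑ i, s i) := neg_lt_neg ((div_lt_one hS).2 hα)
  refine (locallyIntegrable_prod_abs_rpow fun _ : Fin d => hr).mono
    (hcont.measurable.pow_const _).aestronglyMeasurable ?_
  filter_upwards [ae_forall_apply_ne_zero] with x hx
  have hnonneg : 0 ≤ anorm s x := Finset.sum_nonneg fun j _ => by positivity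
  rw [Real.norm_of_nonneg (Real.rpow_nonneg hnonneg _)]
  exact (anorm_rpow_neg_le hs hS hα0.le hx).trans (Real.le_norm_self _)

theorem locallyIntegrable_of_norm_le_anorm_rpow_neg {F : Type*} [NormedAddCommGroup F]
    (hd : 1 ≤ d) (hs : ∀ j, 0 < s j) (hα : α < ∑ j, s j) {Λ : ℝ} {G : (Fin d → ℝ) → F}
    (hG : AEStronglyMeasurable G) (hbound : ∀ x, x ≠ 0 → ‖G x‖ ≤ Λ * anorm s x ^ (-α)) :
    LocallyIntegrable G := by
  refine ((locallyIntegrable_anorm_rpow_neg hs hα).smul Λ).mono hG ?_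
  filter_upwards [ae_forall_apply_ne_zero] with x hx
  have hx0 : x ≠ 0 := fun h => hx ⟨0, hd⟩ (congrFun h _)
  exact (hbound x hx0).trans (Real.le_norm_self _)

end AnisotropicNorm

theorem stmt13_general {d : ℕ} (s : Fin d → ℝ) (α : ℝ) {G g ρ σ : (Fin d → ℝ) → ℝ}
    (hG : LocallyIntegrable G) (hg : LocallyIntegrable g)
    (hconv : ∀ Ω : Set (Fin d → ℝ), MeasurableSet Ω → Bornology.IsBounded Ω →
      Tendsto (fun ε : ℝ => ∫ x in Ω, |ε ^ α * G (fun j => ε ^ s j * x j) - g x|)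
        (𝓝[>] 0) (𝓝 0))
    (hρ : MemLp ρ ∞) (hρsupp : HasCompactSupport ρ)
    (hσ : Integrable σ) (hσsupp : HasCompactSupport σ) :
    Tendsto (fun ε : ℝ => ε ^ α * kernelForm volume G (scaled s ε ρ) (scaled s ε σ))
      (𝓝[>] 0) (𝓝 (kernelForm volume g ρ σ)) := by
  have hK : IsCompact (tsupport ρ - tsupport σ) := by
    simpa only [sub_eq_add_neg] using hρsupp.isCompact.add hσsupp.isCompact.neg
  have hsupp : ρ.support - σ.support ⊆ tsupport ρ - tsupport σ :=
    Set.sub_subset_sub (subset_tsupport ρ) (subset_tsupport σ)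
  have hrescaled : ∀ᶠ ε : ℝ in 𝓝[>] 0,
      IntegrableOn (fun x => ε ^ α * G fun j => ε ^ s j * x j) (tsupport ρ - tsupport σ) := by
    filter_upwards [self_mem_nhdsWithin] with ε hε
    have hc : ∀ j, ε ^ s j ≠ 0 := fun j => (Real.rpow_pos_of_pos hε _).ne'
    exact ((locallyIntegrable_comp_diagonal hc hG).integrableOn_isCompact hK).const_mul _
  refine (tendsto_kernelForm hK.measurableSet hsupp hrescaled (hg.integrableOn_isCompact hK)
    (hconv _ hK.measurableSet hK.isBounded) hρ hσ).congr' ?_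
  filter_upwards [self_mem_nhdsWithin] with ε hε
  rw [kernelForm_const_mul, kernelForm_scaled s G ρ σ hε]

/-- convergence of the regularized variances,
`ε^α ∫∫ G(x−y) ρ_ε(x) ρ_ε(y) dx dy → ∫∫ g(x−y) ρ(x) ρ(y) dx dy` as `ε → 0⁺`. -/
theorem stmt13 (d : ℕ) (hd : 1 ≤ d) (s : Fin d → ℝ) (hs : ∀ j, 1 ≤ s j)
    (α Λ : ℝ) (hα0 : 0 < α) (hα : α < ∑ j, s j) (hΛ : 0 < Λ)
    (G : (Fin d → ℝ) → ℝ) (hGmeas : Measurable G)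
    (hG0 : ∀ x, x ≠ 0 → 0 ≤ G x) (hGbd : ∀ x, x ≠ 0 → G x ≤ Λ * anorm s x ^ (-α))
    (g : (Fin d → ℝ) → ℝ) (hg : LocallyIntegrable g)
    (hconv : ∀ Ωs : Set (Fin d → ℝ), MeasurableSet Ωs → Bornology.IsBounded Ωs →
      Tendsto (fun ε : ℝ => ∫ x in Ωs, |ε ^ α * G (fun j => ε ^ (s j) * x j) - g x|)
        (nhdsWithin 0 (Set.Ioi 0)) (nhds 0))
    (ρ : (Fin d → ℝ) → ℝ) (hρc : Continuous ρ) (hρsupp : HasCompactSupport ρ) :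
    Tendsto (fun ε : ℝ =>
        ε ^ α * ∫ x : Fin d → ℝ, ∫ y : Fin d → ℝ, G (x - y) * scaled s ε ρ x * scaled s ε ρ y)
      (nhdsWithin 0 (Set.Ioi 0))
      (nhds (∫ x : Fin d → ℝ, ∫ y : Fin d → ℝ, g (x - y) * ρ x * ρ y)) :=
  stmt13_general s α
    (locallyIntegrable_of_norm_le_anorm_rpow_neg hd (fun j => one_pos.trans_le (hs j)) hα
      hGmeas.aestronglyMeasurable fun x hx => (abs_of_nonneg (hG0 x hx)).trans_le (hGbd x hx))
    hg hconv (hρc.memLp_of_hasCompactSupport hρsupp) hρsupp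
    (hρc.integrable_of_hasCompactSupport hρsupp) hρsupp
end
end

section
/- Let Λ > 1 and m, r ∈ ℕ and J ≥ 1 an integer. There exists C > 0, depending only on Λ, m, r and J, such that the following holds. Let (X₁, …, X_J) be centered jointly Gaussian real random variables with E X_j² ∈ [Λ^{−1}, Λ] for every j, let n₁, …, n_J ∈ ℕ, and define Φ : ℝ^J → ℂ by Φ(β₁, …, β_J) := (∏_{j=1}^J β_j^{n_j}) · E ∏_{j=1}^J h_{max(m−n_j,0)}(β_j, X_j; E X_j²). Then |(∂_{β₁}^r ⋯ ∂_{β_J}^r Φ)(θ, …, θ)| ≤ C · (C(1+|θ|))^{n₁+⋯+n_J} for every θ ∈ ℝ. -/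
open MeasureTheory ProbabilityTheory Filter

noncomputable section

/-- The partial derivative in the `j`-th coordinate. -/
def pderiv' {J : ℕ} (j : Fin J) (F : (Fin J → ℝ) → ℂ) : (Fin J → ℝ) → ℂ :=
  fun β => deriv (fun t => F (Function.update β j t)) (β j)

/-- The mixed partial derivative `∂_{β₁}^r ⋯ ∂_{β_J}^r`. -/
def mixedDeriv {J : ℕ} (r : ℕ) (F : (Fin J → ℝ) → ℂ) : (Fin J → ℝ) → ℂ :=
  (List.finRange J).foldr (fun j G => (pderiv' j)^[r] G) F

/- Since `h_m(θ, x; a) = h_m(√a θ, x / √a; 1)` and `tⁿ exp (-t² / 2)` has bounded derivatives, every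
`θ`-derivative of `h_m` is at most a constant times `exp |x / √a|`, uniformly in `θ`. By Leibniz,
multiplying by `θⁿ` costs a factor `(2 (1 + |θ|))ⁿ` and a constant independent of `n`; this is
where the exponential growth in `n₁ + ⋯ + n_J` comes from. The product of these bounds dominates
all mixed derivatives, so they pass under the expectation. What remains is
`E ∏ⱼ exp |X_j / √a_j|`; as `∏ⱼ yⱼ ≤ 1 + ∑ⱼ yⱼ^J`, it is bounded by a moment of a single standard
Gaussian, whatever the joint law of the `X_j`. -/

section RealAnalysis

theorem pow_le_factorial_mul_exp {x : ℝ} (hx : 0 ≤ x) (n : ℕ) :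
    x ^ n ≤ n.factorial * Real.exp x := by
  have h := Real.pow_div_factorial_le_exp x hx n
  rwa [div_le_iff₀' (by positivity)] at h

theorem prod_le_one_add_sum_pow_card {ι R : Type*} [CommSemiring R] [LinearOrder R]
    [IsStrictOrderedRing R] (s : Finset ι) {f : ι → R} (hf : ∀ i ∈ s, 0 ≤ f i) :
    ∏ i ∈ s, f i ≤ 1 + ∑ i ∈ s, f i ^ s.card := by
  rcases s.eq_empty_or_nonempty with rfl | hs
  · simp
  obtain ⟨i, hi, hmax⟩ := s.exists_max_image f hs
  calc ∏ j ∈ s, f j ≤ ∏ _j ∈ s, f i := Finset.prod_le_prod hf hmax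
    _ = f i ^ s.card := Finset.prod_const _
    _ ≤ ∑ j ∈ s, f j ^ s.card :=
        Finset.single_le_sum (f := fun j => f j ^ s.card)
          (fun j hj => pow_nonneg (hf j hj) _) hi
    _ ≤ 1 + ∑ j ∈ s, f j ^ s.card := le_add_of_nonneg_left zero_le_one

theorem exists_abs_aeval_le_mul_exp_abs {R : Type*} [CommSemiring R] [Algebra R ℝ]
    (p : Polynomial R) :
    ∃ C, 0 ≤ C ∧ ∀ x : ℝ, |Polynomial.aeval x p| ≤ C * Real.exp |x| := by
  induction p using Polynomial.induction_on' with
  | add p q hp hq =>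
    obtain ⟨C, hC, hp⟩ := hp
    obtain ⟨D, hD, hq⟩ := hq
    refine ⟨C + D, by positivity, fun x => ?_⟩
    rw [map_add, add_mul]
    exact (abs_add_le _ _).trans (add_le_add (hp x) (hq x))
  | monomial n c =>
    refine ⟨|algebraMap R ℝ c| * n.factorial, by positivity, fun x => ?_⟩
    rw [Polynomial.aeval_monomial, abs_mul, abs_pow, mul_assoc]
    gcongr
    exact pow_le_factorial_mul_exp (abs_nonneg x) n

theorem iteratedDeriv_cexp_mul_ofReal (s : ℕ) (c : ℂ) :
    iteratedDeriv s (fun t : ℝ => Complex.exp (c * t)) =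
      fun t : ℝ => c ^ s * Complex.exp (c * t) := by
  induction s with
  | zero => ext; simp
  | succ s ih =>
    ext t
    have h : HasDerivAt (fun u : ℝ => c * (u : ℂ)) c t := by
      simpa using ((hasDerivAt_id (t : ℂ)).comp_ofReal).const_mul c
    rw [iteratedDeriv_succ, ih, (h.cexp.const_mul _).deriv]
    ring

theorem abs_iteratedDeriv_pow_le (p i : ℕ) (t : ℝ) :
    |iteratedDeriv i (fun s : ℝ => s ^ p) t| ≤ i.factorial * (2 * (1 + |t|)) ^ p := by
  have hcoeff : (p.descFactorial i : ℝ) ≤ i.factorial * 2 ^ p := by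
    rw [Nat.descFactorial_eq_factorial_mul_choose]
    exact_mod_cast Nat.mul_le_mul_left _ (Nat.choose_le_two_pow p i)
  have hpow : |t| ^ (p - i) ≤ (1 + |t|) ^ p :=
    calc |t| ^ (p - i) ≤ (1 + |t|) ^ (p - i) := by gcongr; linarith
      _ ≤ (1 + |t|) ^ p := pow_le_pow_right₀ (by linarith [abs_nonneg t]) (Nat.sub_le p i)
  calc |iteratedDeriv i (fun s : ℝ => s ^ p) t| = p.descFactorial i * |t| ^ (p - i) := by
        rw [iteratedDeriv_pow, abs_mul, abs_pow, Nat.abs_cast]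
    _ ≤ i.factorial * 2 ^ p * (1 + |t|) ^ p := by gcongr
    _ = i.factorial * (2 * (1 + |t|)) ^ p := by rw [mul_pow, mul_assoc]

theorem norm_iteratedDeriv_pow_smul_le {E : Type*} [NormedAddCommGroup E] [NormedSpace ℝ E]
    {g : ℝ → E} {k : ℕ} (hg : ContDiff ℝ k g) {B : ℕ → ℝ} {t : ℝ}
    (hB : ∀ i ≤ k, ‖iteratedDeriv i g t‖ ≤ B i) (p : ℕ) :
    ‖iteratedDeriv k (fun s => s ^ p • g s) t‖ ≤
      (∑ i ∈ Finset.range (k + 1), k.choose i * i.factorial * B (k - i)) *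
        (2 * (1 + |t|)) ^ p := by
  have hLeibniz := norm_iteratedFDeriv_smul_le (𝕜 := ℝ) (contDiff_id.pow p) hg t le_rfl
  simp only [norm_iteratedFDeriv_eq_norm_iteratedDeriv, id] at hLeibniz
  refine hLeibniz.trans ?_
  rw [Finset.sum_mul]
  refine Finset.sum_le_sum fun i _ => ?_
  calc k.choose i * ‖iteratedDeriv i (fun s : ℝ => s ^ p) t‖ * ‖iteratedDeriv (k - i) g t‖
      ≤ k.choose i * (i.factorial * (2 * (1 + |t|)) ^ p) * B (k - i) := by
        gcongr
        · exact abs_iteratedDeriv_pow_le p i t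
        · exact hB _ (Nat.sub_le k i)
    _ = k.choose i * i.factorial * B (k - i) * (2 * (1 + |t|)) ^ p := by ring

end RealAnalysis

section HermiteRemainder

/-- The function `ψₙ(t) = tⁿ exp (-t² / 2)`, the `t`-dependence of the `n`-th term of the
Hermite expansion of `exp (i t x)`. -/
def gaussianMonomial (n : ℕ) (t : ℝ) : ℝ := t ^ n * Real.exp (-t ^ 2 / 2)

theorem contDiff_gaussianMonomial (n : ℕ) {k : WithTop ℕ∞} :
    ContDiff ℝ k (gaussianMonomial n) := by
  unfold gaussianMonomial
  fun_prop

theorem deriv_gaussianMonomial (n : ℕ) :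
    deriv (gaussianMonomial n) =
      fun t => n * gaussianMonomial (n - 1) t - gaussianMonomial (n + 1) t := by
  ext t
  have hexp : HasDerivAt (fun s : ℝ => -s ^ 2 / 2) (-t) t :=
    ((hasDerivAt_pow 2 t).neg.div_const 2).congr_deriv (by norm_num; ring)
  have h := (hasDerivAt_pow n t).mul hexp.exp
  refine (h.congr_deriv ?_).deriv
  simp only [gaussianMonomial]
  ring

theorem abs_gaussianMonomial_le (n : ℕ) (t : ℝ) :
    |gaussianMonomial n t| ≤ n.factorial * Real.exp (1 / 2) := by
  have hsq : |t| - t ^ 2 / 2 ≤ 1 / 2 := by nlinarith [sq_nonneg (|t| - 1), sq_abs t]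
  calc |gaussianMonomial n t| = |t| ^ n * Real.exp (-t ^ 2 / 2) := by
        rw [gaussianMonomial, abs_mul, abs_pow, Real.abs_exp]
    _ ≤ n.factorial * Real.exp |t| * Real.exp (-t ^ 2 / 2) := by
        gcongr
        exact pow_le_factorial_mul_exp (abs_nonneg t) n
    _ = n.factorial * Real.exp (|t| - t ^ 2 / 2) := by
        rw [mul_assoc, ← Real.exp_add, neg_div, ← sub_eq_add_neg]
    _ ≤ n.factorial * Real.exp (1 / 2) := by gcongr

theorem exists_abs_iteratedDeriv_gaussianMonomial_le (s n : ℕ) :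
    ∃ C, 0 ≤ C ∧ ∀ t, |iteratedDeriv s (gaussianMonomial n) t| ≤ C := by
  induction s generalizing n with
  | zero =>
    exact ⟨n.factorial * Real.exp (1 / 2), by positivity, fun t => by
      simpa using abs_gaussianMonomial_le n t⟩
  | succ s ih =>
    obtain ⟨C, hC, hC'⟩ := ih (n - 1)
    obtain ⟨D, hD, hD'⟩ := ih (n + 1)
    refine ⟨n * C + D, by positivity, fun t => ?_⟩
    rw [iteratedDeriv_succ', deriv_gaussianMonomial, iteratedDeriv_fun_sub
      (contDiff_const.mul (contDiff_gaussianMonomial _)).contDiffAt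
      (contDiff_gaussianMonomial _).contDiffAt, iteratedDeriv_const_mul_field]
    refine (abs_sub _ _).trans ?_
    rw [abs_mul, Nat.abs_cast]
    gcongr
    · exact hC' t
    · exact hD' t

/-- The function `t ↦ h_m(t, x; 1)`: the remainder of order `m` in the expansion of
`exp (i t x)` in Hermite polynomials of `x`. -/
def hermiteRemainder (m : ℕ) (x t : ℝ) : ℂ :=
  Complex.exp (Complex.I * x * t) -
    ∑ n ∈ Finset.range m, gaussianMonomial n t •
      (Complex.I ^ n / n.factorial * (Polynomial.aeval x (Polynomial.hermite n) : ℝ))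

theorem contDiff_cexp_mul_ofReal (c : ℂ) {k : WithTop ℕ∞} :
    ContDiff ℝ k fun t : ℝ => Complex.exp (c * t) :=
  (contDiff_const.mul Complex.ofRealCLM.contDiff).cexp

theorem contDiff_sum_gaussianMonomial_smul (m : ℕ) (c : ℕ → ℂ) {k : WithTop ℕ∞} :
    ContDiff ℝ k fun t => ∑ n ∈ Finset.range m, gaussianMonomial n t • c n :=
  ContDiff.sum fun n _ => (contDiff_gaussianMonomial n).smul contDiff_const

theorem contDiff_hermiteRemainder (m : ℕ) (x : ℝ) {k : WithTop ℕ∞} :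
    ContDiff ℝ k (hermiteRemainder m x) :=
  (contDiff_cexp_mul_ofReal _).sub (contDiff_sum_gaussianMonomial_smul m _)

theorem iteratedDeriv_hermiteRemainder (m s : ℕ) (x t : ℝ) :
    iteratedDeriv s (hermiteRemainder m x) t =
      (Complex.I * x) ^ s * Complex.exp (Complex.I * x * t) -
        ∑ n ∈ Finset.range m, iteratedDeriv s (gaussianMonomial n) t •
          (Complex.I ^ n / n.factorial * (Polynomial.aeval x (Polynomial.hermite n) : ℝ)) := by
  unfold hermiteRemainder
  rw [iteratedDeriv_fun_sub (contDiff_cexp_mul_ofReal _).contDiffAt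
      (contDiff_sum_gaussianMonomial_smul m _).contDiffAt, iteratedDeriv_cexp_mul_ofReal]
  congr 1
  refine (iteratedDeriv_fun_sum fun n _ => ?_).trans (Finset.sum_congr rfl fun n _ => ?_)
  · exact ((contDiff_gaussianMonomial n).smul contDiff_const).contDiffAt
  · exact iteratedDeriv_smul_const (contDiff_gaussianMonomial n).contDiffAt _

theorem exists_norm_iteratedDeriv_hermiteRemainder_le (M s : ℕ) :
    ∃ C, 0 ≤ C ∧ ∀ m ≤ M, ∀ x t,
      ‖iteratedDeriv s (hermiteRemainder m x) t‖ ≤ C * Real.exp |x| := by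
  choose D hD₀ hD using exists_abs_iteratedDeriv_gaussianMonomial_le s
  choose W hW₀ hW using fun n => exists_abs_aeval_le_mul_exp_abs (Polynomial.hermite n)
  have hDW : ∀ n, 0 ≤ D n * W n := fun n => mul_nonneg (hD₀ n) (hW₀ n)
  refine ⟨s.factorial + ∑ n ∈ Finset.range M, D n * W n,
    add_nonneg (Nat.cast_nonneg _) (Finset.sum_nonneg fun n _ => hDW n), fun m hm x t => ?_⟩
  have hexp : ‖(Complex.I * x) ^ s * Complex.exp (Complex.I * x * t)‖ ≤
      s.factorial * Real.exp |x| := by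
    have hunit : ‖Complex.exp (Complex.I * x * t)‖ = 1 := by
      rw [mul_assoc, ← Complex.ofReal_mul, Complex.norm_exp_I_mul_ofReal]
    rw [norm_mul, hunit, mul_one, norm_pow, norm_mul, Complex.norm_I, one_mul,
      Complex.norm_real]
    exact pow_le_factorial_mul_exp (norm_nonneg x) s
  have hcoeff : ∀ n, ‖Complex.I ^ n / (n.factorial : ℂ)‖ ≤ 1 := fun n => by
    rw [norm_div, norm_pow, Complex.norm_I, one_pow, Complex.norm_natCast]
    exact div_le_one_of_le₀ (mod_cast n.factorial_pos) (by positivity)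
  have hterm : ∀ n, ‖iteratedDeriv s (gaussianMonomial n) t • (Complex.I ^ n / n.factorial *
      ((Polynomial.aeval x (Polynomial.hermite n) : ℝ) : ℂ))‖ ≤ D n * W n * Real.exp |x| :=
    fun n => by
      rw [norm_smul, norm_mul, Complex.norm_real, mul_assoc]
      exact mul_le_mul (hD n t)
        ((mul_le_of_le_one_left (norm_nonneg _) (hcoeff n)).trans (hW n x)) (by positivity) (hD₀ n)
  calc ‖iteratedDeriv s (hermiteRemainder m x) t‖
      ≤ s.factorial * Real.exp |x| + ∑ n ∈ Finset.range m, D n * W n * Real.exp |x| := by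
        rw [iteratedDeriv_hermiteRemainder]
        exact (norm_sub_le _ _).trans (add_le_add hexp (norm_sum_le_of_le _ fun n _ => hterm n))
    _ ≤ s.factorial * Real.exp |x| + ∑ n ∈ Finset.range M, D n * W n * Real.exp |x| := by
        gcongr _ + ?_
        exact Finset.sum_le_sum_of_subset_of_nonneg (Finset.range_subset_range.mpr hm)
          fun n _ _ => mul_nonneg (hDW n) (Real.exp_nonneg _)
    _ = (s.factorial + ∑ n ∈ Finset.range M, D n * W n) * Real.exp |x| := by
        rw [add_mul, Finset.sum_mul]

theorem hFun_eq_hermiteRemainder {a : ℝ} (ha : 0 < a) (m : ℕ) (t x : ℝ) :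
    hFun m t x a = hermiteRemainder m (x / √a) (√a * t) := by
  have hroot : √a ≠ 0 := (Real.sqrt_pos.mpr ha).ne'
  have hphase : Complex.I * t * x = Complex.I * ↑(x / √a) * ↑(√a * t) := by
    have : t * x = x / √a * (√a * t) := by field_simp
    rw [mul_assoc, mul_assoc, ← Complex.ofReal_mul, ← Complex.ofReal_mul, this]
  rw [hFun, hermiteRemainder, hphase]
  congr 1
  refine Finset.sum_congr rfl fun n _ => ?_
  have hexponent : -(√a * t) ^ 2 / 2 = -(a * t ^ 2) / 2 := by
    rw [mul_pow, Real.sq_sqrt ha.le]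
  rw [gaussianMonomial, wick, hexponent, mul_pow, Complex.real_smul]
  push_cast
  ring

theorem contDiff_hFun {a : ℝ} (ha : 0 < a) (m : ℕ) (x : ℝ) {k : WithTop ℕ∞} :
    ContDiff ℝ k fun t => hFun m t x a := by
  simp only [hFun_eq_hermiteRemainder ha]
  exact (contDiff_hermiteRemainder m _).comp (contDiff_const.mul contDiff_id)

theorem continuous_hFun (m : ℕ) (t a : ℝ) : Continuous fun x => hFun m t x a := by
  have hwick : ∀ n, Continuous (wick a n) := fun n =>
    continuous_const.mul ((Polynomial.continuous_aeval _).comp (continuous_id.div_const _))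
  unfold hFun
  fun_prop

theorem exists_norm_iteratedDeriv_hFun_le (Λ : ℝ) (M s : ℕ) :
    ∃ C, 0 ≤ C ∧ ∀ m ≤ M, ∀ a ∈ Set.Ioc 0 Λ, ∀ x t,
      ‖iteratedDeriv s (fun t => hFun m t x a) t‖ ≤ C * Real.exp |x / √a| := by
  obtain ⟨C, hC, hbound⟩ := exists_norm_iteratedDeriv_hermiteRemainder_le M s
  refine ⟨√Λ ^ s * C, by positivity, fun m hm a ha x t => ?_⟩
  simp only [hFun_eq_hermiteRemainder ha.1]
  have hscale := iteratedDeriv_comp_const_smul (contDiff_hermiteRemainder m (x / √a) (k := s)) √a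
  rw [hscale, norm_smul, norm_pow, Real.norm_of_nonneg (Real.sqrt_nonneg a), mul_assoc]
  gcongr
  · exact ha.2
  · exact hbound m hm _ _

theorem exists_norm_iteratedDeriv_pow_smul_hFun_le (Λ : ℝ) (M k : ℕ) :
    ∃ C, 0 ≤ C ∧ ∀ p, ∀ m ≤ M, ∀ a ∈ Set.Ioc 0 Λ, ∀ x t,
      ‖iteratedDeriv k (fun t => t ^ p • hFun m t x a) t‖ ≤
        C * (2 * (1 + |t|)) ^ p * Real.exp |x / √a| := by
  choose B hB₀ hB using exists_norm_iteratedDeriv_hFun_le Λ M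
  refine ⟨∑ i ∈ Finset.range (k + 1), k.choose i * i.factorial * B (k - i),
    Finset.sum_nonneg fun i _ => mul_nonneg (by positivity) (hB₀ _), fun p m hm a ha x t => ?_⟩
  have hLeibniz := norm_iteratedDeriv_pow_smul_le (contDiff_hFun ha.1 m x)
    (fun i (_ : i ≤ k) => hB i m hm a ha x t) p
  refine hLeibniz.trans_eq ?_
  simp only [← mul_assoc, ← Finset.sum_mul]
  exact mul_right_comm _ _ _

end HermiteRemainder

section MixedDerivative

variable {Ω : Type*} [MeasurableSpace Ω] {P : Measure Ω}

theorem aestronglyMeasurable_deriv_apply {E : Type*} [NormedAddCommGroup E] [NormedSpace ℝ E]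
    {g : ℝ → Ω → E} (hg : ∀ t, AEStronglyMeasurable (g t) P) {t : ℝ}
    (hdiff : ∀ ω, DifferentiableAt ℝ (g · ω) t) :
    AEStronglyMeasurable (fun ω => deriv (g · ω) t) P :=
  aestronglyMeasurable_of_tendsto_ae (nhdsWithin 0 {0}ᶜ)
    (fun s => ((hg (t + s)).sub (hg t)).const_smul s⁻¹)
    (ae_of_all _ fun ω => (hdiff ω).hasDerivAt.tendsto_slope_zero)

/-- `g` is a random smooth function each of whose derivatives is bounded, locally uniformly in
`t`, by a multiple of the random variable `Y`. -/
structure IsSmoothlyDominated {E : Type*} [NormedAddCommGroup E] [NormedSpace ℝ E]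
    (g : ℝ → Ω → E) (Y : Ω → ℝ) (P : Measure Ω) : Prop where
  contDiff : ∀ ω (k : ℕ), ContDiff ℝ k (g · ω)
  aestronglyMeasurable : ∀ t, AEStronglyMeasurable (g t) P
  exists_norm_le : ∀ (k : ℕ) (R : ℝ), ∃ C, ∀ t, |t| ≤ R → ∀ ω,
    ‖iteratedDeriv k (g · ω) t‖ ≤ C * Y ω

namespace IsSmoothlyDominated

variable {E : Type*} [NormedAddCommGroup E] [NormedSpace ℝ E] {g : ℝ → Ω → E} {Y : Ω → ℝ}

theorem differentiable_iteratedDeriv (hg : IsSmoothlyDominated g Y P) (k : ℕ) (ω : Ω) :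
    Differentiable ℝ (iteratedDeriv k (g · ω)) :=
  (hg.contDiff ω (k + 1)).differentiable_iteratedDeriv k (mod_cast k.lt_succ_self)

theorem aestronglyMeasurable_iteratedDeriv (hg : IsSmoothlyDominated g Y P) (k : ℕ) (t : ℝ) :
    AEStronglyMeasurable (fun ω => iteratedDeriv k (g · ω) t) P := by
  induction k generalizing t with
  | zero => simpa only [iteratedDeriv_zero] using hg.aestronglyMeasurable t
  | succ k ih =>
    simp only [iteratedDeriv_succ]
    exact aestronglyMeasurable_deriv_apply ih fun ω => hg.differentiable_iteratedDeriv k ω t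

end IsSmoothlyDominated

/-- The partial derivative of multi-index `k` of `β ↦ ∏ j, g j (β j) ω`. -/
def partialProd {ι : Type*} [Fintype ι] (g : ι → ℝ → Ω → ℂ) (k : ι → ℕ) (β : ι → ℝ)
    (ω : Ω) : ℂ :=
  ∏ j, iteratedDeriv (k j) (g j · ω) (β j)

section PartialProd

variable {ι : Type*} [Fintype ι] {g : ι → ℝ → Ω → ℂ} {Y : ι → Ω → ℝ}

theorem hasDerivAt_partialProd_update [DecidableEq ι]
    (hg : ∀ j, IsSmoothlyDominated (g j) (Y j) P) (k : ι → ℕ) (β : ι → ℝ) (i : ι) (t : ℝ)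
    (ω : Ω) :
    HasDerivAt (fun s => partialProd g k (Function.update β i s) ω)
      (partialProd g (k + Pi.single i 1) (Function.update β i t) ω) t := by
  have hsplit : ∀ (l : ι → ℕ) (s : ℝ), partialProd g l (Function.update β i s) ω =
      iteratedDeriv (l i) (g i · ω) s *
        ∏ j ∈ Finset.univ \ {i}, iteratedDeriv (l j) (g j · ω) (β j) := fun l s => by
    simp only [partialProd, Function.apply_update (fun j => iteratedDeriv (l j) (g j · ω)),
      Finset.prod_update_of_mem (Finset.mem_univ i)]
  have hrest : ∏ j ∈ Finset.univ \ {i},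
        iteratedDeriv ((k + Pi.single i 1 : ι → ℕ) j) (g j · ω) (β j) =
      ∏ j ∈ Finset.univ \ {i}, iteratedDeriv (k j) (g j · ω) (β j) :=
    Finset.prod_congr rfl fun j hj => by
      have hj : j ≠ i := by simpa using hj
      rw [Pi.add_apply, Pi.single_eq_of_ne hj, add_zero]
  simp only [hsplit]
  rw [hrest, Pi.add_apply, Pi.single_eq_same, iteratedDeriv_succ]
  exact ((hg i).differentiable_iteratedDeriv (k i) ω t).hasDerivAt.mul_const _

theorem aestronglyMeasurable_partialProd (hg : ∀ j, IsSmoothlyDominated (g j) (Y j) P)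
    (k : ι → ℕ) (β : ι → ℝ) : AEStronglyMeasurable (partialProd g k β) P :=
  Finset.aestronglyMeasurable_fun_prod _ fun j _ =>
    (hg j).aestronglyMeasurable_iteratedDeriv (k j) (β j)

theorem exists_norm_partialProd_le (hg : ∀ j, IsSmoothlyDominated (g j) (Y j) P)
    (k : ι → ℕ) (R : ℝ) :
    ∃ C, ∀ β, ‖β‖ ≤ R → ∀ ω, ‖partialProd g k β ω‖ ≤ C * ∏ j, Y j ω := by
  choose C hC using fun j => (hg j).exists_norm_le (k j) R
  refine ⟨∏ j, C j, fun β hβ ω => ?_⟩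
  rw [partialProd, norm_prod, ← Finset.prod_mul_distrib]
  exact Finset.prod_le_prod (fun j _ => norm_nonneg _) fun j _ =>
    hC j (β j) ((norm_le_pi_norm β j).trans hβ) ω

theorem integrable_partialProd (hg : ∀ j, IsSmoothlyDominated (g j) (Y j) P)
    (hY : Integrable (fun ω => ∏ j, Y j ω) P) (k : ι → ℕ) (β : ι → ℝ) :
    Integrable (partialProd g k β) P := by
  obtain ⟨C, hC⟩ := exists_norm_partialProd_le hg k ‖β‖
  exact (hY.const_mul C).mono' (aestronglyMeasurable_partialProd hg k β)
    (ae_of_all _ (hC β le_rfl))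

end PartialProd

section Integral

variable {J : ℕ} {g : Fin J → ℝ → Ω → ℂ} {Y : Fin J → Ω → ℝ}

theorem pderiv'_integral_partialProd (hg : ∀ j, IsSmoothlyDominated (g j) (Y j) P)
    (hY : Integrable (fun ω => ∏ j, Y j ω) P) (i : Fin J) (k : Fin J → ℕ) :
    pderiv' i (fun β => ∫ ω, partialProd g k β ω ∂P) =
      fun β => ∫ ω, partialProd g (k + Pi.single i 1) β ω ∂P := by
  ext β
  obtain ⟨C, hC⟩ := exists_norm_partialProd_le hg (k + Pi.single i 1) (‖β‖ + 1)
  have hball : ∀ t ∈ Metric.ball (β i) 1, ‖Function.update β i t‖ ≤ ‖β‖ + 1 := fun t ht => by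
    refine (pi_norm_le_iff_of_nonneg (by positivity)).mpr fun j => ?_
    rcases eq_or_ne j i with rfl | hj
    · rw [Function.update_self]
      have := norm_le_pi_norm β j
      linarith [norm_le_norm_add_norm_sub' t (β j), (mem_ball_iff_norm.mp ht).le]
    · rw [Function.update_of_ne hj]
      linarith [norm_le_pi_norm β j]
  have hderiv := (hasDerivAt_integral_of_dominated_loc_of_deriv_le
    (F := fun t => partialProd g k (Function.update β i t))
    (F' := fun t => partialProd g (k + Pi.single i 1) (Function.update β i t))
    (Metric.ball_mem_nhds (β i) one_pos)
    (Eventually.of_forall fun t => aestronglyMeasurable_partialProd hg k _)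
    (integrable_partialProd hg hY k _) (aestronglyMeasurable_partialProd hg _ _)
    (ae_of_all _ fun ω t ht => hC _ (hball t ht) ω) (hY.const_mul C)
    (ae_of_all _ fun ω t _ => hasDerivAt_partialProd_update hg k β i t ω)).2
  rw [pderiv', hderiv.deriv, Function.update_eq_self]

theorem iterate_pderiv'_integral_partialProd (hg : ∀ j, IsSmoothlyDominated (g j) (Y j) P)
    (hY : Integrable (fun ω => ∏ j, Y j ω) P) (i : Fin J) (k : Fin J → ℕ) (r : ℕ) :
    (pderiv' i)^[r] (fun β => ∫ ω, partialProd g k β ω ∂P) =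
      fun β => ∫ ω, partialProd g (k + Pi.single i r) β ω ∂P := by
  induction r with
  | zero => simp
  | succ r ih =>
    rw [Function.iterate_succ_apply', ih, pderiv'_integral_partialProd hg hY, add_assoc,
      ← Pi.single_add]

theorem mixedDeriv_integral_prod (hg : ∀ j, IsSmoothlyDominated (g j) (Y j) P)
    (hY : Integrable (fun ω => ∏ j, Y j ω) P) (r : ℕ) :
    mixedDeriv r (fun β => ∫ ω, ∏ j, g j (β j) ω ∂P) =
      fun β => ∫ ω, ∏ j, iteratedDeriv r (g j · ω) (β j) ∂P := by
  have hfold : ∀ l : List (Fin J), l.foldr (fun j G => (pderiv' j)^[r] G)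
      (fun β => ∫ ω, ∏ j, g j (β j) ω ∂P) =
        fun β => ∫ ω, partialProd g (l.map fun j => Pi.single j r).sum β ω ∂P := fun l => by
    induction l with
    | nil => simp [partialProd]
    | cons i l ih =>
      rw [List.foldr_cons, ih, iterate_pderiv'_integral_partialProd hg hY, List.map_cons,
        List.sum_cons, add_comm]
  have hindex : ((List.finRange J).map fun j => Pi.single j r).sum = fun _ => r := by
    rw [← Fin.sum_univ_def]
    exact Finset.univ_sum_single fun _ => r
  rw [mixedDeriv, hfold, hindex]
  rfl

theorem norm_mixedDeriv_integral_prod_le (hg : ∀ j, IsSmoothlyDominated (g j) (Y j) P)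
    (hY : Integrable (fun ω => ∏ j, Y j ω) P) {r : ℕ} {β c : Fin J → ℝ}
    (hc : ∀ j ω, ‖iteratedDeriv r (g j · ω) (β j)‖ ≤ c j * Y j ω) :
    ‖mixedDeriv r (fun β => ∫ ω, ∏ j, g j (β j) ω ∂P) β‖ ≤
      (∏ j, c j) * ∫ ω, ∏ j, Y j ω ∂P := by
  rw [mixedDeriv_integral_prod hg hY, ← integral_const_mul]
  refine norm_integral_le_of_norm_le (hY.const_mul _) (ae_of_all _ fun ω => ?_)
  rw [norm_prod, ← Finset.prod_mul_distrib]
  exact Finset.prod_le_prod (fun j _ => norm_nonneg _) fun j _ => hc j ω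

end Integral

end MixedDerivative

section ProductMoment

variable {Ω ι : Type*} [MeasurableSpace Ω] [Fintype ι] {P : Measure Ω} {Y : ι → Ω → ℝ}

theorem integrable_prod_of_integrable_pow_card [IsFiniteMeasure P]
    (hmeas : ∀ i, AEStronglyMeasurable (Y i) P) (hY : ∀ i ω, 0 ≤ Y i ω)
    (hint : ∀ i, Integrable (fun ω => Y i ω ^ Fintype.card ι) P) :
    Integrable (fun ω => ∏ i, Y i ω) P := by
  have hsum := integrable_finsetSum Finset.univ fun i _ => hint i
  refine ((integrable_const 1).add hsum).mono'
    (Finset.aestronglyMeasurable_fun_prod _ fun i _ => hmeas i) (ae_of_all _ fun ω => ?_)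
  rw [Real.norm_of_nonneg (Finset.prod_nonneg fun i _ => hY i ω)]
  exact prod_le_one_add_sum_pow_card _ fun i _ => hY i ω

theorem integral_prod_le_one_add_sum_integral_pow_card [IsProbabilityMeasure P]
    (hmeas : ∀ i, AEStronglyMeasurable (Y i) P) (hY : ∀ i ω, 0 ≤ Y i ω)
    (hint : ∀ i, Integrable (fun ω => Y i ω ^ Fintype.card ι) P) :
    ∫ ω, ∏ i, Y i ω ∂P ≤ 1 + ∑ i, ∫ ω, Y i ω ^ Fintype.card ι ∂P := by
  have hsum := integrable_finsetSum Finset.univ fun i _ => hint i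
  calc ∫ ω, ∏ i, Y i ω ∂P ≤ ∫ ω, 1 + ∑ i, Y i ω ^ Fintype.card ι ∂P :=
        integral_mono (integrable_prod_of_integrable_pow_card hmeas hY hint)
          ((integrable_const 1).add hsum)
          fun ω => prod_le_one_add_sum_pow_card _ fun i _ => hY i ω
    _ = 1 + ∑ i, ∫ ω, Y i ω ^ Fintype.card ι ∂P := by
        rw [integral_add (integrable_const 1) hsum, integral_finsetSum _ fun i _ => hint i,
          integral_const, probReal_univ, one_smul]

end ProductMoment

section Gaussian

variable {Ω : Type*} [MeasurableSpace Ω] {P : Measure Ω}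

theorem IsCenteredGaussianFamily.exists_hasLaw {ι : Type*} {X : ι → Ω → ℝ}
    (hX : IsCenteredGaussianFamily P X) (i : ι) :
    ∃ v : NNReal, HasLaw (X i) (gaussianReal 0 v) P := by
  obtain ⟨v, hv⟩ : ∃ v : NNReal, P.map (X i) = gaussianReal 0 v := by simpa using hX {i} 1
  exact ⟨v, aemeasurable_of_map_neZero (by rw [hv]; infer_instance), hv⟩

theorem integral_sq_of_hasLaw_gaussianReal {X : Ω → ℝ} {v : NNReal}
    (hX : HasLaw X (gaussianReal 0 v) P) : ∫ ω, X ω ^ 2 ∂P = v := by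
  have hmean : ∫ ω, X ω ∂P = 0 := by rw [hX.integral_eq, integral_id_gaussianReal]
  rw [← variance_of_integral_eq_zero hX.aemeasurable hmean, hX.variance_eq,
    variance_id_gaussianReal]

theorem hasLaw_div_sqrt_integral_sq {X : Ω → ℝ} {v : NNReal}
    (hX : HasLaw X (gaussianReal 0 v) P) (hpos : 0 < ∫ ω, X ω ^ 2 ∂P) :
    HasLaw (fun ω => X ω / √(∫ ω', X ω' ^ 2 ∂P)) (gaussianReal 0 1) P := by
  rw [integral_sq_of_hasLaw_gaussianReal hX] at hpos ⊢
  have hvar : v / .mk (√(v : ℝ) ^ 2) (sq_nonneg _) = 1 := by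
    ext
    simp [Real.sq_sqrt hpos.le, hpos.ne']
  simpa only [zero_div, hvar] using gaussianReal_div_const hX √(v : ℝ)

theorem integrable_exp_abs_pow_gaussianReal (μ : ℝ) (v : NNReal) (p : ℕ) :
    Integrable (fun y => Real.exp |y| ^ p) (gaussianReal μ v) := by
  simpa only [← Real.exp_nat_mul] using
    integrable_exp_mul_abs (integrable_exp_mul_gaussianReal p) (integrable_exp_mul_gaussianReal _)

theorem aestronglyMeasurable_exp_abs {X : Ω → ℝ} (hX : AEMeasurable X P) :
    AEStronglyMeasurable (fun ω => Real.exp |X ω|) P :=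
  ((Real.continuous_exp.comp continuous_abs).measurable.comp_aemeasurable hX).aestronglyMeasurable

theorem integrable_exp_abs_pow_of_hasLaw_gaussianReal {X : Ω → ℝ} {μ : ℝ} {v : NNReal}
    (hX : HasLaw X (gaussianReal μ v) P) (p : ℕ) :
    Integrable (fun ω => Real.exp |X ω| ^ p) P :=
  (hX.map_eq ▸ integrable_exp_abs_pow_gaussianReal μ v p).comp_aemeasurable hX.aemeasurable

variable {ι : Type*} [Fintype ι] [IsProbabilityMeasure P] {X : ι → Ω → ℝ} {μ : ℝ} {v : NNReal}

theorem integrable_prod_exp_abs_of_hasLaw_gaussianReal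
    (hX : ∀ i, HasLaw (X i) (gaussianReal μ v) P) :
    Integrable (fun ω => ∏ i, Real.exp |X i ω|) P :=
  integrable_prod_of_integrable_pow_card
    (fun i => aestronglyMeasurable_exp_abs (hX i).aemeasurable) (fun _ _ => Real.exp_nonneg _)
    fun i => integrable_exp_abs_pow_of_hasLaw_gaussianReal (hX i) _

theorem integral_prod_exp_abs_le_of_hasLaw_gaussianReal
    (hX : ∀ i, HasLaw (X i) (gaussianReal μ v) P) :
    ∫ ω, ∏ i, Real.exp |X i ω| ∂P ≤
      1 + Fintype.card ι * ∫ y, Real.exp |y| ^ Fintype.card ι ∂gaussianReal μ v := by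
  have hlaw : ∀ i, ∫ ω, Real.exp |X i ω| ^ Fintype.card ι ∂P =
      ∫ y, Real.exp |y| ^ Fintype.card ι ∂gaussianReal μ v := fun i =>
    (hX i).integral_comp (integrable_exp_abs_pow_gaussianReal μ v _).aestronglyMeasurable
  simpa [hlaw] using integral_prod_le_one_add_sum_integral_pow_card
    (fun i => aestronglyMeasurable_exp_abs (hX i).aemeasurable)
    (fun _ _ => Real.exp_nonneg _)
    fun i => integrable_exp_abs_pow_of_hasLaw_gaussianReal (hX i) _

end Gaussian

theorem isSmoothlyDominated_pow_smul_hFun {Ω : Type*} [MeasurableSpace Ω] {P : Measure Ω}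
    {X : Ω → ℝ} (hX : AEMeasurable X P) {a : ℝ} (ha : 0 < a) (p m : ℕ) :
    IsSmoothlyDominated (fun t ω => t ^ p • hFun m t (X ω) a)
      (fun ω => Real.exp |X ω / √a|) P where
  contDiff ω _ := (contDiff_id.pow p).smul (contDiff_hFun ha m (X ω))
  aestronglyMeasurable t :=
    (((continuous_hFun m t a).const_smul (t ^ p)).measurable.comp_aemeasurable
      hX).aestronglyMeasurable
  exists_norm_le k R := by
    obtain ⟨C, hC, hbound⟩ := exists_norm_iteratedDeriv_pow_smul_hFun_le a m k
    refine ⟨C * (2 * (1 + R)) ^ p, fun t ht ω => ?_⟩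
    refine (hbound p m le_rfl a ⟨ha, le_rfl⟩ (X ω) t).trans ?_
    gcongr

theorem prod_pow_mul_integral_prod_hFun {Ω ι : Type*} [MeasurableSpace Ω] [Fintype ι]
    (P : Measure Ω) (X : ι → Ω → ℝ) (m n : ι → ℕ) (a β : ι → ℝ) :
    (∏ j, (β j : ℂ) ^ n j) * ∫ ω, ∏ j, hFun (m j) (β j) (X j ω) (a j) ∂P =
      ∫ ω, ∏ j, β j ^ n j • hFun (m j) (β j) (X j ω) (a j) ∂P := by
  simp only [← integral_const_mul, ← Finset.prod_mul_distrib, Complex.real_smul,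
    Complex.ofReal_pow]

theorem stmt15_general (Λ : ℝ) (m r J : ℕ) :
    ∃ C > 0,
      ∀ (Ω : Type*) (_ : MeasurableSpace Ω) (P : Measure Ω), IsProbabilityMeasure P →
      ∀ X : Fin J → Ω → ℝ, (∀ j, ∃ v : NNReal, HasLaw (X j) (gaussianReal 0 v) P) →
        (∀ j, (∫ ω, X j ω ^ 2 ∂P) ∈ Set.Ioc 0 Λ) →
        ∀ (n : Fin J → ℕ) (θ : ℝ),
          ‖mixedDeriv r (fun β => (∏ j, (β j : ℂ) ^ n j) *
                ∫ ω, ∏ j, hFun (m - n j) (β j) (X j ω) (∫ ω', X j ω' ^ 2 ∂P) ∂P)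
              (fun _ => θ)‖ ≤ C * (C * (1 + |θ|)) ^ (∑ j, n j) := by
  obtain ⟨A, hA, hbound⟩ := exists_norm_iteratedDeriv_pow_smul_hFun_le Λ m r
  set K : ℝ := 1 + J * ∫ y, Real.exp |y| ^ J ∂gaussianReal 0 1
  have hK : 0 ≤ A ^ J * K := by positivity
  refine ⟨A ^ J * K + 2, by positivity, fun Ω _ P _ X hX hvar n θ => ?_⟩
  choose v hv using hX
  set a : Fin J → ℝ := fun j => ∫ ω, X j ω ^ 2 ∂P
  have hY : ∀ j, HasLaw (fun ω => X j ω / √(a j)) (gaussianReal 0 1) P := fun j =>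
    hasLaw_div_sqrt_integral_sq (hv j) (hvar j).1
  have hmoment : ∫ ω, ∏ j, Real.exp |X j ω / √(a j)| ∂P ≤ K := by
    simpa only [Fintype.card_fin] using integral_prod_exp_abs_le_of_hasLaw_gaussianReal hY
  have hderiv : ‖mixedDeriv r (fun β => ∫ ω, ∏ j, β j ^ n j •
        hFun (m - n j) (β j) (X j ω) (a j) ∂P) (fun _ => θ)‖ ≤
      (∏ j, A * (2 * (1 + |θ|)) ^ n j) * ∫ ω, ∏ j, Real.exp |X j ω / √(a j)| ∂P :=
    norm_mixedDeriv_integral_prod_le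
      (fun j => isSmoothlyDominated_pow_smul_hFun (hv j).aemeasurable (hvar j).1 _ _)
      (integrable_prod_exp_abs_of_hasLaw_gaussianReal hY)
      fun j ω => hbound (n j) _ (Nat.sub_le m (n j)) (a j) (hvar j) (X j ω) θ
  simp only [prod_pow_mul_integral_prod_hFun]
  calc _ ≤ (∏ j, A * (2 * (1 + |θ|)) ^ n j) * K := hderiv.trans (by gcongr)
    _ = A ^ J * K * (2 * (1 + |θ|)) ^ ∑ j, n j := by
        rw [Finset.prod_mul_distrib, Finset.prod_pow_eq_pow_sum, Finset.prod_const,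
          Finset.card_univ, Fintype.card_fin, mul_right_comm]
    _ ≤ (A ^ J * K + 2) * ((A ^ J * K + 2) * (1 + |θ|)) ^ ∑ j, n j := by
        gcongr <;> linarith

/-- Lemma 2.3: the chaos coefficient bound
`|(∂_{β₁}^r ⋯ ∂_{β_J}^r Φ)(θ,…,θ)| ≤ C (C(1+|θ|))^{n₁+⋯+n_J}` for
`Φ(β) = (∏_j β_j^{n_j}) · E ∏_j h_{max(m−n_j,0)}(β_j, X_j; E X_j²)`. -/
theorem stmt15 (Λ : ℝ) (hΛ : 1 < Λ) (m r : ℕ) (J : ℕ) (hJ : 1 ≤ J) :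
    ∃ C > 0,
      ∀ (Ω : Type) (_ : MeasurableSpace Ω) (P : Measure Ω), IsProbabilityMeasure P →
      ∀ X : Fin J → Ω → ℝ, IsCenteredGaussianFamily P X →
        (∀ j, (∫ ω, X j ω ^ 2 ∂P) ∈ Set.Icc Λ⁻¹ Λ) →
        ∀ (n : Fin J → ℕ) (θ : ℝ),
          ‖mixedDeriv r (fun β => (∏ j, (β j : ℂ) ^ n j) *
                ∫ ω, ∏ j, hFun (m - n j) (β j) (X j ω) (∫ ω', X j ω' ^ 2 ∂P) ∂P)
              (fun _ => θ)‖ ≤ C * (C * (1 + |θ|)) ^ (∑ j, n j) := by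
  obtain ⟨C, hC, hbound⟩ := stmt15_general Λ m r J
  exact ⟨C, hC, fun Ω _ P hP X hX hvar => hbound Ω _ P hP X hX.exists_hasLaw fun j =>
    ⟨(inv_pos.mpr (one_pos.trans hΛ)).trans_le (hvar j).1, (hvar j).2⟩⟩
end
end
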